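/- arXiv:2010.09502 — 2 statements merged into one kernel-verified Lean document; each statement's English description precedes it below -/
import Mathlib

section
/- For every u ∈ [−π, π] with u ≠ 0 and every n ∈ ℕ, n ≥ 1, the improper integral ∫₀^∞ x · K₀ˢ(2x·cosh u) · Im[J_{in/2}(x)²] dx converges and equals sinh(πn/2) · ( 2·sin(nu)/(π·sinh(πn)·sinh(2u)) − 1/(2π·cosh(πn/2)·cosh u) ). -/
open MeasureTheory Filter Topology

/-- Bessel function of the first kind of complex order `ν` at real `x > 0`. -/
noncomputable def besselJ (ν : ℂ) (x : ℝ) : ℂ :=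
  ∑' k : ℕ, ((-1 : ℂ) ^ k * Complex.exp ((ν + 2 * k) * (Real.log (x / 2) : ℂ))) /
    ((Nat.factorial k : ℂ) * Complex.Gamma (ν + k + 1))

/-- Bessel function of the second kind of complex order `ν` at real `x > 0`. -/
noncomputable def besselY (ν : ℂ) (x : ℝ) : ℂ :=
  (besselJ ν x * Complex.cos (Real.pi * ν) - besselJ (-ν) x) / Complex.sin (Real.pi * ν)

/-- Bessel function of the first kind of order `0` (real-valued). -/
noncomputable def besselJ0 (x : ℝ) : ℝ :=
  ∑' k : ℕ, (-1 : ℝ) ^ k * (x / 2) ^ (2 * k) / (Nat.factorial k : ℝ) ^ 2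

/-- Lommel function `S_{-1,0}` for `x > 0`. -/
noncomputable def lommelS (x : ℝ) : ℝ :=
  ∫ t in Set.Ioi (0 : ℝ), t * Real.exp (-x * Real.sinh t)

/-- Struve function `K₀` for `x > 0`. -/
noncomputable def struveK0 (x : ℝ) : ℝ :=
  (2 / Real.pi) * ∫ t in Set.Ioi (0 : ℝ), Real.exp (-x * Real.sinh t)

/-- Bessel function of the second kind of order `0` (real-valued, for `x > 0`). -/
noncomputable def besselY0 (x : ℝ) : ℝ :=
  (2 / Real.pi) * ((Real.log (x / 2) + Real.eulerMascheroniConstant) * besselJ0 x +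
    ∑' k : ℕ, (-1 : ℝ) ^ k * ((harmonic (k + 1) : ℚ) : ℝ) * (x / 2) ^ (2 * (k + 1)) /
      (Nat.factorial (k + 1) : ℝ) ^ 2)

/-- Struve function `H₀`: `H₀ = K₀ˢ + Y₀`. -/
noncomputable def struveH0 (x : ℝ) : ℝ := struveK0 x + besselY0 x

/-!
Put `F x = Im J_{iτ}(x)²` with `τ = n / 2`, and let `w` be the weight `x (1 + x²)^(-3/2)` on
`(0, ∞)`. An integration by parts shows `y K₀ˢ(y) = (2 / π) (1 - ℒw(y))`, where `ℒ` is the Laplace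
transform. Hence the integral is `(π cosh u)⁻¹ (Λ - M(2 cosh u))`, where `Λ = ∫₀^∞ F` and
`M(ε) = ∫₀^∞ w(x) ℒF(εx) dx = ∫₀^∞ ℒw(εx) F(x) dx` is an Abel mean.

Neumann's formula `π J_ν(x)² = ∫ J_{2ν}(2x cos θ) dθ` over `|θ| < π / 2` and the Laplace transform
of `J_{2iτ}`, found from a first-order differential equation, give
`M(2c) = -π⁻¹ ∫₀^∞ sin(2τr) sinh r / (c² + sinh² r) dr`. At `c = cosh u` this reduces to the Fourier
transform of `1 / cosh`, and as `c → 0` it tends to `-tanh(πτ) / 2`.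

Finally, `√x J_{iτ}(x)` solves `w'' + (1 + q / x²) w = 0`, so `∫₀ᵀ F` is a constant multiple of
`log T` plus a convergent term. A nonzero multiple would make the Abel means unbounded; hence `Λ`
converges, to `lim M(ε) = -tanh(πτ) / 2`.
-/

/-! ### Bessel functions -/

section ExpSeries

open scoped Nat

/-- The exponential generating series `∑ bₖ zᵏ / k!` of a sequence `b`. -/
noncomputable def expSeries (b : ℕ → ℂ) (z : ℂ) : ℂ := ∑' k : ℕ, b k * (z ^ k / k !)

variable {b : ℕ → ℂ} {C : ℝ}

lemma summable_expSeries (hb : ∀ k, ‖b k‖ ≤ C) (z : ℂ) :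
    Summable fun k : ℕ => b k * (z ^ k / k !) := by
  refine ((Real.summable_pow_div_factorial ‖z‖).mul_left C).of_norm_bounded fun k => ?_
  rw [norm_mul, norm_div, norm_pow, Complex.norm_natCast]
  gcongr
  exact hb k

lemma hasSum_natCast_mul_expSeries (hb : ∀ k, ‖b k‖ ≤ C) (z : ℂ) :
    HasSum (fun k : ℕ => k * (b k * (z ^ k / k !))) (z * expSeries (fun k => b (k + 1)) z) := by
  rw [← hasSum_nat_add_iff' 1]
  simp only [Finset.range_one, Finset.sum_singleton, Nat.cast_zero, zero_mul, sub_zero]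
  refine ((summable_expSeries (fun k => hb (k + 1)) z).hasSum.mul_left z).congr_fun fun k => ?_
  have hk : (k : ℂ) + 1 ≠ 0 := Nat.cast_add_one_ne_zero k
  rw [Nat.factorial_succ, pow_succ]
  push_cast
  field_simp

lemma hasDerivAt_expSeries (hb : ∀ k, ‖b k‖ ≤ C) (z : ℂ) :
    HasDerivAt (expSeries b) (expSeries (fun k => b (k + 1)) z) z := by
  have hzero : ∀ y : ℂ, b 0 * (y ^ 0 / (0 ! : ℂ)) = b 0 := by simp
  have hsplit : expSeries b = fun y => b 0 + ∑' k : ℕ, b (k + 1) * (y ^ (k + 1) / (k + 1)!) := by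
    ext y
    rw [expSeries, (summable_expSeries hb y).tsum_eq_zero_add, hzero]
  have hderiv : ∀ (k : ℕ) (y : ℂ), HasDerivAt (fun y : ℂ => b (k + 1) * (y ^ (k + 1) / (k + 1)!))
      (b (k + 1) * (y ^ k / k !)) y := by
    intro k y
    refine (((hasDerivAt_pow (k + 1) y).div_const _).const_mul _).congr_deriv ?_
    have hk : (k : ℂ) + 1 ≠ 0 := Nat.cast_add_one_ne_zero k
    rw [Nat.factorial_succ, add_tsub_cancel_right]
    push_cast
    field_simp
  rw [hsplit]
  refine (hasDerivAt_tsum_of_isPreconnected (t := Metric.ball 0 (‖z‖ + 1)) (y₀ := z)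
    ((Real.summable_pow_div_factorial (‖z‖ + 1)).mul_left C) Metric.isOpen_ball
    (convex_ball _ _).isPreconnected (fun k y _ => hderiv k y) (fun k y hy => ?_) (by simp) ?_
    (by simp)).const_add (b 0)
  · rw [norm_mul, norm_div, norm_pow, Complex.norm_natCast]
    have hy' : ‖y‖ ≤ ‖z‖ + 1 := (mem_ball_zero_iff.mp hy).le
    exact mul_le_mul (hb _) (by gcongr) (by positivity) ((norm_nonneg _).trans (hb 0))
  · exact (summable_nat_add_iff 1).mpr (summable_expSeries hb z)

end ExpSeries

lemma exists_norm_inv_Gamma_add_nat_le (s : ℂ) :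
    ∃ C : ℝ, ∀ k : ℕ, ‖(Complex.Gamma (s + k))⁻¹‖ ≤ C := by
  obtain ⟨N, hN⟩ := exists_nat_ge (‖s‖ + 1)
  have hstep : ∀ k ≥ N,
      ‖(Complex.Gamma (s + (k + 1 : ℕ)))⁻¹‖ ≤ ‖(Complex.Gamma (s + k))⁻¹‖ := by
    intro k hk
    have hk' : (N : ℝ) ≤ k := by exact_mod_cast hk
    have hnorm : 1 ≤ ‖s + k‖ := by
      have := norm_sub_le (s + k) s
      rw [add_sub_cancel_left, Complex.norm_natCast] at this
      linarith
    rw [Complex.one_div_Gamma_eq_self_mul_one_div_Gamma_add_one (s + k), norm_mul, add_assoc]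
    push_cast
    exact le_mul_of_one_le_left (norm_nonneg _) hnorm
  have hbdd : BddAbove (Set.range fun k : ℕ => ‖(Complex.Gamma (s + k))⁻¹‖) := by
    refine IsBoundedUnder.bddAbove_range (isBoundedUnder_of_eventually_le
      (a := ‖(Complex.Gamma (s + N))⁻¹‖) ?_)
    filter_upwards [eventually_ge_atTop N] with k hk
    induction k, hk using Nat.le_induction with
    | base => exact le_rfl
    | succ k hk ih => exact (hstep k hk).trans ih
  exact ⟨_, fun k => le_ciSup hbdd k⟩

section BesselClifford

/-- The Bessel–Clifford function `∑ zᵏ / (k! Γ(ν + k + 1))`, the entire factor of `J_ν`. -/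
noncomputable def besselClifford (ν : ℂ) : ℂ → ℂ :=
  expSeries fun k => (Complex.Gamma (ν + k + 1))⁻¹

variable (ν z : ℂ)

lemma exists_norm_besselClifford_coeff_le :
    ∃ C : ℝ, ∀ k : ℕ, ‖(Complex.Gamma (ν + k + 1))⁻¹‖ ≤ C := by
  simpa only [add_right_comm] using exists_norm_inv_Gamma_add_nat_le (ν + 1)

lemma hasDerivAt_besselClifford :
    HasDerivAt (besselClifford ν) (besselClifford (ν + 1) z) z := by
  obtain ⟨C, hC⟩ := exists_norm_besselClifford_coeff_le ν
  refine (hasDerivAt_expSeries hC z).congr_deriv ?_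
  simp only [besselClifford, Nat.cast_add, Nat.cast_one, ← add_assoc, add_right_comm]

lemma continuous_besselClifford : Continuous (besselClifford ν) :=
  continuous_iff_continuousAt.mpr fun z => (hasDerivAt_besselClifford ν z).continuousAt

lemma besselClifford_zero : besselClifford ν 0 = (Complex.Gamma (ν + 1))⁻¹ := by
  rw [besselClifford, expSeries, tsum_eq_single 0 fun k hk => by rw [zero_pow hk]; ring]
  simp

lemma besselClifford_recurrence :
    besselClifford ν z =
      (ν + 1) * besselClifford (ν + 1) z + z * besselClifford (ν + 2) z := by
  obtain ⟨C, hC⟩ := exists_norm_besselClifford_coeff_le (ν + 1)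
  have hshift : (fun k : ℕ => (Complex.Gamma (ν + 1 + (k + 1 : ℕ) + 1))⁻¹) =
      fun k : ℕ => (Complex.Gamma (ν + 2 + k + 1))⁻¹ := by
    ext k
    push_cast
    ring_nf
  have hsum := ((summable_expSeries hC z).hasSum.mul_left (ν + 1)).add
    (hasSum_natCast_mul_expSeries hC z)
  rw [hshift] at hsum
  refine (hsum.congr_fun fun k => ?_).tsum_eq
  beta_reduce
  rw [Complex.one_div_Gamma_eq_self_mul_one_div_Gamma_add_one (ν + k + 1),
    show ν + k + 1 + 1 = ν + 1 + k + 1 by ring]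
  ring

end BesselClifford

section BesselJ

lemma cexp_log_half {x : ℝ} (hx : 0 < x) : Complex.exp (Real.log (x / 2)) = x / 2 := by
  rw [← Complex.ofReal_exp, Real.exp_log (by positivity), Complex.ofReal_div, Complex.ofReal_ofNat]

variable (ν : ℂ) {x : ℝ}

lemma besselJ_eq_exp_mul_besselClifford (hx : 0 < x) :
    besselJ ν x = Complex.exp (ν * Real.log (x / 2)) * besselClifford ν (-(x / 2) ^ 2) := by
  have hexp := cexp_log_half hx
  rw [besselJ, besselClifford, expSeries, ← tsum_mul_left]
  refine tsum_congr fun k => ?_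
  rw [show (ν + 2 * k) * (Real.log (x / 2) : ℂ) =
      ν * Real.log (x / 2) + (2 * k : ℕ) * Real.log (x / 2) by push_cast; ring,
    Complex.exp_add, Complex.exp_nat_mul, hexp, pow_mul, neg_pow ((x / 2 : ℂ) ^ 2)]
  ring

lemma besselJ_recurrence (hx : 0 < x) :
    besselJ ν x = 2 * (ν + 1) / x * besselJ (ν + 1) x - besselJ (ν + 2) x := by
  have hexp := cexp_log_half hx
  have hxc : (x : ℂ) ≠ 0 := by exact_mod_cast hx.ne'
  simp only [besselJ_eq_exp_mul_besselClifford _ hx, besselClifford_recurrence ν, add_mul,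
    Complex.exp_add, one_mul, two_mul, hexp]
  field_simp
  ring

lemma hasDerivAt_besselJ (hx : 0 < x) :
    HasDerivAt (besselJ ν) (ν / x * besselJ ν x - besselJ (ν + 1) x) x := by
  have hexp := cexp_log_half hx
  have hlog : HasDerivAt (fun x : ℝ => (Real.log (x / 2) : ℂ)) (x⁻¹ : ℝ) x :=
    (((hasDerivAt_id' x).div_const 2).log (by positivity)).ofReal_comp.congr_deriv
      (by congr 1; field_simp)
  have hsq : HasDerivAt (fun x : ℝ => -((x : ℂ) / 2) ^ 2) (-(x / 2 : ℂ)) x :=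
    (((hasDerivAt_id' x).ofReal_comp.div_const 2).pow 2).neg.congr_deriv (by
      simp only [Nat.cast_ofNat, Nat.add_one_sub_one, pow_one, Complex.ofReal_one, one_div]
      ring)
  have hJ := (hlog.const_mul ν).cexp.mul
    ((hasDerivAt_besselClifford ν (-((x : ℂ) / 2) ^ 2)).comp x hsq)
  refine (hJ.congr_of_eventuallyEq ?_).congr_deriv ?_
  · filter_upwards [eventually_gt_nhds hx] with y hy
    exact besselJ_eq_exp_mul_besselClifford ν hy
  · simp only [besselJ_eq_exp_mul_besselClifford _ hx, add_mul, Complex.exp_add, one_mul, hexp,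
      Function.comp_apply]
    push_cast
    ring

lemma hasDerivAt_besselJ_add_one (hx : 0 < x) :
    HasDerivAt (besselJ (ν + 1)) (besselJ ν x - (ν + 1) / x * besselJ (ν + 1) x) x := by
  refine (hasDerivAt_besselJ (ν + 1) hx).congr_deriv ?_
  rw [besselJ_recurrence ν hx, show ν + 1 + 1 = ν + 2 by ring]
  ring

lemma continuousOn_besselJ : ContinuousOn (besselJ ν) (Set.Ioi 0) := fun _ hx =>
  (hasDerivAt_besselJ ν hx).continuousAt.continuousWithinAt

end BesselJ

/-! ### The averaged square of an oscillating solution -/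

lemma exists_norm_sub_le_div_of_norm_deriv_le {E : Type*} [NormedAddCommGroup E]
    [NormedSpace ℝ E] [CompleteSpace E] {f f' : ℝ → E} {C : ℝ}
    (hf : ∀ x ≥ 1, HasDerivAt f (f' x) x) (hC : ∀ x ≥ 1, ‖f' x‖ ≤ C / x ^ 2) :
    ∃ l : E, ∀ x ≥ 1, ‖f x - l‖ ≤ C / x := by
  have hC0 : 0 ≤ C := by simpa using (norm_nonneg _).trans (hC 1 le_rfl)
  have hincr : ∀ x ≥ 1, ∀ y ≥ x, ‖f y - f x‖ ≤ C / x := by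
    intro x hx y hxy
    have hbound : ‖f y - f x‖ ≤ C / x - C / y := by
      refine image_norm_le_of_norm_deriv_right_le_deriv_boundary' (f := fun y => f y - f x)
        (f' := f') (B := fun y => C / x - C / y) (B' := fun y => C / y ^ 2)
        (fun z hz => ((hf z (hx.trans hz.1)).continuousAt.sub
          continuousAt_const).continuousWithinAt)
        (fun z hz => ((hf z (hx.trans hz.1)).sub_const _).hasDerivWithinAt) (by simp)
        (fun z hz => ?_) (fun z hz => ?_) (fun z hz => hC z (hx.trans hz.1)) ⟨hxy, le_rfl⟩
      · have hz0 : z ≠ 0 := (zero_lt_one.trans_le (hx.trans hz.1)).ne'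
        exact (continuousAt_const.sub (continuousAt_const.div continuousAt_id hz0)
          ).continuousWithinAt
      · have hz0 : z ≠ 0 := (zero_lt_one.trans_le (hx.trans hz.1)).ne'
        exact ((((hasDerivAt_const z C).div (hasDerivAt_id' z) hz0).const_sub _).congr_deriv
          (by ring)).hasDerivWithinAt
    have : 0 ≤ C / y := div_nonneg hC0 (zero_le_one.trans (hx.trans hxy))
    linarith
  have hcauchy : CauchySeq fun x => f (max 1 x) := by
    refine cauchySeq_of_le_tendsto_0' (fun x => C / max 1 x) (fun x y hxy => ?_)
      (tendsto_const_nhds.div_atTop (tendsto_atTop_mono (le_max_right 1) tendsto_id))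
    rw [dist_comm, dist_eq_norm]
    exact hincr _ (le_max_left _ _) _ (max_le_max_left _ hxy)
  obtain ⟨l, hl⟩ := cauchySeq_tendsto_of_complete hcauchy
  refine ⟨l, fun x hx => ?_⟩
  rw [norm_sub_rev]
  refine le_of_tendsto ((hl.sub_const (f x)).norm) ?_
  filter_upwards [eventually_ge_atTop x] with y hy
  exact hincr x hx _ (hy.trans (le_max_right _ _))

section OscillatingSolution

variable {q : ℝ}

lemma exists_bound_of_hasDerivAt_neg_one_add_div {E : Type*} [NormedAddCommGroup E]
    [InnerProductSpace ℝ E] {w w' : ℝ → E} (hq : 0 ≤ q) (hw : ∀ x > 0, HasDerivAt w (w' x) x)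
    (hw' : ∀ x > 0, HasDerivAt w' (-(1 + q / x ^ 2) • w x) x) :
    ∃ B : ℝ, ∀ x ≥ 1, ‖w x‖ ≤ B ∧ ‖w' x‖ ≤ B := by
  set M : ℝ → ℝ := fun x => (‖w x‖ ^ 2 + ‖w' x‖ ^ 2) * Real.exp (q / x)
  set M' : ℝ → ℝ := fun x =>
    -(Real.exp (q / x) * (q / x ^ 2) * (‖w x‖ ^ 2 + ‖w' x‖ ^ 2 + 2 * inner ℝ (w x) (w' x)))
  have hderiv : ∀ x > 0, HasDerivAt M (M' x) x := by
    intro x hx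
    have hexp := ((hasDerivAt_const x q).div (hasDerivAt_id' x) hx.ne').exp
    refine (((hw x hx).norm_sq.add (hw' x hx).norm_sq).mul hexp).congr_deriv ?_
    simp only [M', Pi.add_apply, Pi.div_apply, real_inner_smul_right, real_inner_comm (w x)]
    ring
  have hnonpos : ∀ x > 0, M' x ≤ 0 := by
    intro x hx
    rw [Left.neg_nonpos_iff]
    have hsq := sq_nonneg (‖w x + w' x‖)
    rw [norm_add_sq_real] at hsq
    have : 0 ≤ Real.exp (q / x) * (q / x ^ 2) := by positivity
    exact mul_nonneg this (by linarith)
  have hanti : AntitoneOn M (Set.Ioi 0) := by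
    refine antitoneOn_of_hasDerivWithinAt_nonpos (f' := M') (convex_Ioi 0)
      (fun x hx => (hderiv x hx).continuousAt.continuousWithinAt) ?_ ?_ <;>
      rw [interior_Ioi]
    exacts [fun x hx => (hderiv x hx).hasDerivWithinAt, hnonpos]
  refine ⟨√(M 1), fun x hx => ?_⟩
  have hx0 : 0 < x := zero_lt_one.trans_le hx
  have henergy : ‖w x‖ ^ 2 + ‖w' x‖ ^ 2 ≤ M 1 :=
    (le_mul_of_one_le_right (by positivity) (Real.one_le_exp (by positivity))).trans
      (hanti (Set.mem_Ioi.mpr one_pos) hx0 hx)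
  constructor <;> refine Real.le_sqrt_of_sq_le ?_ <;> nlinarith [sq_nonneg ‖w x‖, sq_nonneg ‖w' x‖]

variable {w w' : ℝ → ℂ}

lemma exists_norm_sq_add_sq_sub_le_div {B : ℝ} (hq : 0 ≤ q)
    (hw : ∀ x > 0, HasDerivAt w (w' x) x)
    (hw' : ∀ x > 0, HasDerivAt w' (-(1 + q / x ^ 2) • w x) x)
    (hB : ∀ x ≥ 1, ‖w x‖ ≤ B ∧ ‖w' x‖ ≤ B) :
    ∃ e : ℂ, ∀ x ≥ 1, ‖w x ^ 2 + w' x ^ 2 - e‖ ≤ 2 * q * B ^ 2 / x := by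
  refine exists_norm_sub_le_div_of_norm_deriv_le
    (f' := fun x => ((-2 * q / x ^ 2 : ℝ) : ℂ) * (w x * w' x)) (fun x hx => ?_) fun x hx => ?_
  · have hx0 : 0 < x := zero_lt_one.trans_le hx
    refine (((hw x hx0).pow 2).add ((hw' x hx0).pow 2)).congr_deriv ?_
    rw [Complex.real_smul]
    push_cast
    ring
  · obtain ⟨hwB, hw'B⟩ := hB x hx
    have hprod : ‖w x‖ * ‖w' x‖ ≤ B ^ 2 := by
      rw [sq]
      exact mul_le_mul hwB hw'B (norm_nonneg _) ((norm_nonneg _).trans hwB)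
    rw [norm_mul, norm_mul, Complex.norm_real, neg_mul, neg_div, norm_neg, Real.norm_of_nonneg
      (by positivity), div_mul_eq_mul_div]
    gcongr

lemma hasDerivAt_sub_log_add_mul_div {W : ℝ → ℂ} {x : ℝ} (e : ℂ) (hx : 0 < x)
    (hw : HasDerivAt w (w' x) x) (hw' : HasDerivAt w' (-(1 + q / x ^ 2) • w x) x)
    (hW : HasDerivAt W (w x ^ 2 / x) x) :
    HasDerivAt (fun x : ℝ => W x - e / 2 * Real.log x + w x * w' x / (2 * x))
      ((w x ^ 2 + w' x ^ 2 - e) / (2 * x) - q * w x ^ 2 / (2 * x ^ 3)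
        - w x * w' x / (2 * x ^ 2)) x := by
  have hxc : (x : ℂ) ≠ 0 := by exact_mod_cast hx.ne'
  have hx2 : HasDerivAt (fun x : ℝ => 2 * (x : ℂ)) (2 * 1) x :=
    (hasDerivAt_id' x).ofReal_comp.const_mul 2
  refine ((hW.sub ((Real.hasDerivAt_log hx.ne').ofReal_comp.const_mul (e / 2))).add
    ((hw.mul hw').div hx2 (by simpa using hxc))).congr_deriv ?_
  simp only [Pi.mul_apply, Complex.real_smul]
  push_cast
  field_simp
  ring

lemma norm_energy_defect_le {B x : ℝ} {e a b : ℂ} (hq : 0 ≤ q) (hx : 1 ≤ x) (ha : ‖a‖ ≤ B)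
    (hb : ‖b‖ ≤ B) (he : ‖a ^ 2 + b ^ 2 - e‖ ≤ 2 * q * B ^ 2 / x) :
    ‖(a ^ 2 + b ^ 2 - e) / (2 * x) - q * a ^ 2 / (2 * x ^ 3) - a * b / (2 * x ^ 2)‖ ≤
      (q * B ^ 2 + q * B ^ 2 / 2 + B ^ 2 / 2) / x ^ 2 := by
  have hx0 : 0 < x := zero_lt_one.trans_le hx
  refine ((norm_sub_le _ _).trans (add_le_add_left (norm_sub_le _ _) _)).trans ?_
  simp only [norm_div, norm_mul, norm_pow, Complex.norm_real, RCLike.norm_ofNat,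
    Real.norm_of_nonneg hq, Real.norm_of_nonneg hx0.le, add_div]
  gcongr ?_ + ?_ + ?_
  · calc ‖a ^ 2 + b ^ 2 - e‖ / (2 * x) ≤ 2 * q * B ^ 2 / x / (2 * x) := by gcongr
      _ = q * B ^ 2 / x ^ 2 := by field_simp
  · calc q * ‖a‖ ^ 2 / (2 * x ^ 3) ≤ q * B ^ 2 / (2 * x ^ 2) := by
          gcongr
          norm_num
      _ = q * B ^ 2 / 2 / x ^ 2 := by field_simp
  · calc ‖a‖ * ‖b‖ / (2 * x ^ 2) ≤ B * B / (2 * x ^ 2) := by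
          gcongr
          exact (norm_nonneg _).trans ha
      _ = B ^ 2 / 2 / x ^ 2 := by field_simp

/-- Up to the bounded oscillation `w w' / 2x`, the derivative of `W` is half the energy
`w ^ 2 + w' ^ 2` over `x`, and the energy converges at rate `1 / x`. -/
lemma exists_tendsto_sub_log_of_hasDerivAt_sq_div {W : ℝ → ℂ} (hq : 0 ≤ q)
    (hw : ∀ x > 0, HasDerivAt w (w' x) x)
    (hw' : ∀ x > 0, HasDerivAt w' (-(1 + q / x ^ 2) • w x) x)
    (hW : ∀ x > 0, HasDerivAt W (w x ^ 2 / x) x) :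
    ∃ e l : ℂ, Tendsto (fun T : ℝ => W T - e * Real.log T) atTop (𝓝 l) := by
  obtain ⟨B, hB⟩ := exists_bound_of_hasDerivAt_neg_one_add_div hq hw hw'
  obtain ⟨e, he⟩ := exists_norm_sq_add_sq_sub_le_div hq hw hw' hB
  obtain ⟨l, hl⟩ := exists_norm_sub_le_div_of_norm_deriv_le
    (fun x hx => have hx0 := zero_lt_one.trans_le hx
      hasDerivAt_sub_log_add_mul_div e hx0 (hw x hx0) (hw' x hx0) (hW x hx0))
    (fun x hx => norm_energy_defect_le hq hx (hB x hx).1 (hB x hx).2 (he x hx))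
  have hzero : ∀ C : ℝ, Tendsto (fun x : ℝ => C / x) atTop (𝓝 0) := fun C =>
    tendsto_const_nhds.div_atTop tendsto_id
  have hosc : Tendsto (fun x : ℝ => w x * w' x / (2 * x)) atTop (𝓝 0) := by
    refine squeeze_zero_norm' ?_ (hzero (B * B / 2))
    filter_upwards [eventually_ge_atTop 1] with x hx
    have hx0 : 0 < x := zero_lt_one.trans_le hx
    rw [norm_div, norm_mul, norm_mul, Complex.norm_real, RCLike.norm_ofNat,
      Real.norm_of_nonneg hx0.le, ← div_div]
    gcongr
    exacts [(norm_nonneg _).trans (hB x hx).1, (hB x hx).1, (hB x hx).2]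
  have hlim : Tendsto (fun x : ℝ => W x - e / 2 * Real.log x + w x * w' x / (2 * x)) atTop
      (𝓝 l) := by
    rw [tendsto_iff_norm_sub_tendsto_zero]
    exact squeeze_zero' (Eventually.of_forall fun _ => norm_nonneg _)
      ((eventually_ge_atTop 1).mono fun x hx => hl x hx) (hzero _)
  exact ⟨e / 2, l, by simpa using hlim.sub hosc⟩

end OscillatingSolution

section BesselImaginaryOrder

lemma hasDerivAt_sqrt_mul_besselJ (ν : ℂ) {x : ℝ} (hx : 0 < x) :
    HasDerivAt (fun x : ℝ => (√x : ℂ) * besselJ ν x)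
      (√x * ((ν + 1 / 2) / x * besselJ ν x - besselJ (ν + 1) x)) x := by
  have hsq : (√x : ℂ) ^ 2 = x := by exact_mod_cast Real.sq_sqrt hx.le
  have hs : (√x : ℂ) ≠ 0 := by exact_mod_cast (Real.sqrt_pos.mpr hx).ne'
  refine ((Real.hasDerivAt_sqrt hx.ne').ofReal_comp.mul (hasDerivAt_besselJ ν hx)).congr_deriv ?_
  push_cast
  rw [← hsq]
  field_simp
  ring

lemma hasDerivAt_sqrt_mul_besselJ_deriv (ν : ℂ) {x : ℝ} (hx : 0 < x) :
    HasDerivAt (fun x : ℝ => (√x : ℂ) * ((ν + 1 / 2) / x * besselJ ν x - besselJ (ν + 1) x))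
      (-(1 + (1 / 4 - ν ^ 2) / x ^ 2) * (√x * besselJ ν x)) x := by
  have hsq : (√x : ℂ) ^ 2 = x := by exact_mod_cast Real.sq_sqrt hx.le
  have hs : (√x : ℂ) ≠ 0 := by exact_mod_cast (Real.sqrt_pos.mpr hx).ne'
  have hxc : (x : ℂ) ≠ 0 := by exact_mod_cast hx.ne'
  refine ((Real.hasDerivAt_sqrt hx.ne').ofReal_comp.mul
    ((((hasDerivAt_const x (ν + 1 / 2)).div (hasDerivAt_id' x).ofReal_comp hxc).mul
      (hasDerivAt_besselJ ν hx)).sub (hasDerivAt_besselJ_add_one ν hx))).congr_deriv ?_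
  simp only [Pi.sub_apply, Pi.mul_apply, Pi.div_apply]
  push_cast
  rw [← hsq]
  field_simp
  ring

variable (τ : ℝ)

lemma hasDerivAt_sqrt_mul_besselJ_deriv_I_mul {x : ℝ} (hx : 0 < x) :
    HasDerivAt (fun x : ℝ => (√x : ℂ) * ((Complex.I * τ + 1 / 2) / x * besselJ (Complex.I * τ) x
        - besselJ (Complex.I * τ + 1) x))
      (-(1 + (1 / 4 + τ ^ 2) / x ^ 2) • ((√x : ℂ) * besselJ (Complex.I * τ) x)) x := by
  refine (hasDerivAt_sqrt_mul_besselJ_deriv (Complex.I * τ) hx).congr_deriv ?_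
  rw [Complex.real_smul, mul_pow, Complex.I_sq]
  push_cast
  ring

lemma exists_norm_besselJ_I_mul_le :
    ∃ B : ℝ, ∀ x > 0, ‖besselJ (Complex.I * τ) x‖ ≤ B := by
  obtain ⟨B₁, hB₁⟩ := (isCompact_Icc (a := (0 : ℝ)) (b := 1)).exists_bound_of_continuousOn
    (f := fun x : ℝ => besselClifford (Complex.I * τ) (-(x / 2) ^ 2))
    ((continuous_besselClifford _).comp (by fun_prop)).continuousOn
  obtain ⟨B₂, hB₂⟩ := exists_bound_of_hasDerivAt_neg_one_add_div (q := 1 / 4 + τ ^ 2)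
    (by positivity) (fun x hx => hasDerivAt_sqrt_mul_besselJ (Complex.I * τ) hx)
    (fun x hx => hasDerivAt_sqrt_mul_besselJ_deriv_I_mul τ hx)
  refine ⟨max B₁ B₂, fun x hx => ?_⟩
  rcases le_total x 1 with hx1 | hx1
  · rw [besselJ_eq_exp_mul_besselClifford _ hx, norm_mul, Complex.norm_exp,
      show (Complex.I * τ * Real.log (x / 2)).re = 0 by simp, Real.exp_zero, one_mul]
    exact (hB₁ x ⟨hx.le, hx1⟩).trans (le_max_left _ _)
  · have hnorm := (hB₂ x hx1).1
    rw [norm_mul, Complex.norm_real, Real.norm_of_nonneg (Real.sqrt_nonneg x)] at hnorm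
    exact ((le_mul_of_one_le_left (norm_nonneg _) (Real.one_le_sqrt.mpr hx1)).trans hnorm).trans
      (le_max_right _ _)

lemma exists_norm_besselJ_I_mul_add_one_le :
    ∃ B : ℝ, ∀ x > 0, ‖besselJ (Complex.I * τ + 1) x‖ ≤ B := by
  obtain ⟨B₁, hB₁⟩ := (isCompact_Icc (a := (0 : ℝ)) (b := 1)).exists_bound_of_continuousOn
    (f := fun x : ℝ => x / 2 * besselClifford (Complex.I * τ + 1) (-(x / 2) ^ 2))
    (Continuous.mul (by fun_prop)
      ((continuous_besselClifford _).comp (by fun_prop))).continuousOn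
  obtain ⟨B₂, hB₂⟩ := exists_norm_besselJ_I_mul_le τ
  obtain ⟨B₃, hB₃⟩ := exists_bound_of_hasDerivAt_neg_one_add_div (q := 1 / 4 + τ ^ 2)
    (by positivity) (fun x hx => hasDerivAt_sqrt_mul_besselJ (Complex.I * τ) hx)
    (fun x hx => hasDerivAt_sqrt_mul_besselJ_deriv_I_mul τ hx)
  refine ⟨max B₁ (‖Complex.I * τ + 1 / 2‖ * B₂ + B₃), fun x hx => ?_⟩
  rcases le_total x 1 with hx1 | hx1
  · rw [besselJ_eq_exp_mul_besselClifford _ hx, add_one_mul, Complex.exp_add, cexp_log_half hx,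
      mul_assoc, norm_mul, Complex.norm_exp,
      show (Complex.I * τ * Real.log (x / 2)).re = 0 by simp, Real.exp_zero, one_mul]
    exact (hB₁ x ⟨hx.le, hx1⟩).trans (le_max_left _ _)
  · have hnorm := (hB₃ x hx1).2
    rw [norm_mul, Complex.norm_real, Real.norm_of_nonneg (Real.sqrt_nonneg x)] at hnorm
    have hderiv := (le_mul_of_one_le_left (norm_nonneg _) (Real.one_le_sqrt.mpr hx1)).trans hnorm
    have hfirst : ‖(Complex.I * τ + 1 / 2) / x * besselJ (Complex.I * τ) x‖ ≤
        ‖Complex.I * τ + 1 / 2‖ * B₂ := by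
      rw [norm_mul, norm_div, Complex.norm_real, Real.norm_of_nonneg hx.le]
      gcongr
      · exact div_le_self (norm_nonneg _) hx1
      · exact hB₂ x hx
    exact ((norm_le_norm_add_norm_sub _ _).trans (add_le_add hfirst hderiv)).trans
      (le_max_right _ _)

lemma exists_norm_besselJ_I_mul_sq_le :
    ∃ B : ℝ, ∀ x > 0, ‖besselJ (Complex.I * τ) x ^ 2‖ ≤ B := by
  obtain ⟨B, hB⟩ := exists_norm_besselJ_I_mul_le τ
  refine ⟨B ^ 2, fun x hx => ?_⟩
  rw [norm_pow]
  gcongr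
  exact hB x hx

lemma continuousOn_besselJ_sq (ν : ℂ) :
    ContinuousOn (fun x => besselJ ν x ^ 2) (Set.Ioi 0) :=
  (continuousOn_besselJ ν).pow 2

end BesselImaginaryOrder

lemma intervalIntegrable_of_continuousOn_Ioi_of_norm_le {E : Type*} [NormedAddCommGroup E]
    {f : ℝ → E} {B T : ℝ} (hf : ContinuousOn f (Set.Ioi 0)) (hB : ∀ x > 0, ‖f x‖ ≤ B)
    (hT : 0 ≤ T) : IntervalIntegrable f volume 0 T := by
  rw [intervalIntegrable_iff_integrableOn_Ioc_of_le hT]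
  refine IntegrableOn.of_bound measure_Ioc_lt_top
    ((hf.mono Set.Ioc_subset_Ioi_self).aestronglyMeasurable measurableSet_Ioc) B ?_
  filter_upwards [ae_restrict_mem measurableSet_Ioc] with x hx using hB x hx.1

lemma hasDerivAt_integral_of_continuousOn_Ioi_of_norm_le {E : Type*} [NormedAddCommGroup E]
    [NormedSpace ℝ E] [CompleteSpace E] {f : ℝ → E} {B x : ℝ} (hf : ContinuousOn f (Set.Ioi 0))
    (hB : ∀ x > 0, ‖f x‖ ≤ B) (hx : 0 < x) :
    HasDerivAt (fun T : ℝ => ∫ t in (0 : ℝ)..T, f t) (f x) x :=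
  intervalIntegral.integral_hasDerivAt_right
    (intervalIntegrable_of_continuousOn_Ioi_of_norm_le hf hB hx.le)
    (hf.stronglyMeasurableAtFilter isOpen_Ioi x hx) (hf.continuousAt (Ioi_mem_nhds hx))

lemma exists_tendsto_integral_im_besselJ_sq_sub_log (τ : ℝ) :
    ∃ e l : ℝ, Tendsto (fun T : ℝ =>
      (∫ x in (0 : ℝ)..T, (besselJ (Complex.I * τ) x ^ 2).im) - e * Real.log T) atTop (𝓝 l) := by
  obtain ⟨B, hB⟩ := exists_norm_besselJ_I_mul_sq_le τ
  have hcont := continuousOn_besselJ_sq (Complex.I * τ)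
  obtain ⟨e, l, hlim⟩ := exists_tendsto_sub_log_of_hasDerivAt_sq_div (q := 1 / 4 + τ ^ 2)
    (by positivity) (fun x hx => hasDerivAt_sqrt_mul_besselJ (Complex.I * τ) hx)
    (fun x hx => hasDerivAt_sqrt_mul_besselJ_deriv_I_mul τ hx)
    (W := fun T => ∫ x in (0 : ℝ)..T, besselJ (Complex.I * τ) x ^ 2) (fun x hx => by
      have hsq : (√x : ℂ) ^ 2 = x := by exact_mod_cast Real.sq_sqrt (le_of_lt hx)
      have hxc : (x : ℂ) ≠ 0 := by exact_mod_cast (ne_of_gt hx)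
      rw [mul_pow, hsq, mul_div_cancel_left₀ _ hxc]
      exact hasDerivAt_integral_of_continuousOn_Ioi_of_norm_le hcont hB hx)
  refine ⟨e.im, l.im, ((Complex.continuous_im.tendsto l).comp hlim).congr' ?_⟩
  filter_upwards [eventually_ge_atTop 0] with T hT
  have him := Complex.imCLM.intervalIntegral_comp_comm
    (intervalIntegrable_of_continuousOn_Ioi_of_norm_le hcont hB hT)
  simp only [Complex.imCLM_apply] at him
  rw [him, Function.comp_apply, Complex.sub_im, Complex.im_mul_ofReal]

/-! ### Laplace transforms and their weighted means -/

section Laplace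

variable {E : Type*} [NormedAddCommGroup E] [NormedSpace ℝ E]

/-- The Laplace transform of `f` at the real point `a`. -/
noncomputable def laplace (f : ℝ → E) (a : ℝ) : E := ∫ x in Set.Ioi 0, Real.exp (-(a * x)) • f x

lemma integrableOn_exp_neg_mul_Ioi {a : ℝ} (ha : 0 < a) :
    IntegrableOn (fun x => Real.exp (-(a * x))) (Set.Ioi 0) := by
  simpa only [neg_mul] using exp_neg_integrableOn_Ioi 0 ha

lemma integral_exp_neg_mul_Ioi {a : ℝ} (ha : 0 < a) :
    ∫ x in Set.Ioi (0 : ℝ), Real.exp (-(a * x)) = 1 / a := by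
  simpa [neg_mul] using integral_exp_mul_Ioi (neg_neg_of_pos ha) 0

variable {f : ℝ → E} {a B : ℝ}

lemma norm_exp_neg_mul_smul (a x : ℝ) (v : E) :
    ‖Real.exp (-(a * x)) • v‖ = Real.exp (-(a * x)) * ‖v‖ := by
  rw [norm_smul, Real.norm_of_nonneg (Real.exp_pos _).le]

lemma norm_exp_neg_mul_smul_le (ha : 0 ≤ a) {x : ℝ} (hx : 0 ≤ x) (v : E) :
    ‖Real.exp (-(a * x)) • v‖ ≤ ‖v‖ := by
  rw [norm_exp_neg_mul_smul]
  refine mul_le_of_le_one_left (norm_nonneg v) (Real.exp_le_one_iff.mpr ?_)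
  rw [Left.neg_nonpos_iff]
  positivity

lemma integrableOn_exp_neg_mul_smul_of_norm_le (ha : 0 < a) (hf : ContinuousOn f (Set.Ioi 0))
    (hB : ∀ x > 0, ‖f x‖ ≤ B) :
    IntegrableOn (fun x => Real.exp (-(a * x)) • f x) (Set.Ioi 0) := by
  refine Integrable.mono' ((integrableOn_exp_neg_mul_Ioi ha).mul_const B)
    ((ContinuousOn.smul (by fun_prop) hf).aestronglyMeasurable measurableSet_Ioi) ?_
  filter_upwards [ae_restrict_mem measurableSet_Ioi] with x hx
  rw [norm_exp_neg_mul_smul]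
  gcongr
  exact hB x hx

lemma norm_laplace_le (ha : 0 < a) (hB : ∀ x > 0, ‖f x‖ ≤ B) : ‖laplace f a‖ ≤ B / a := by
  rw [div_eq_mul_one_div, mul_comm, ← integral_exp_neg_mul_Ioi ha, ← integral_mul_const]
  refine norm_integral_le_of_norm_le ((integrableOn_exp_neg_mul_Ioi ha).mul_const B) ?_
  filter_upwards [ae_restrict_mem measurableSet_Ioi] with x hx
  rw [norm_exp_neg_mul_smul]
  gcongr
  exact hB x hx

lemma aestronglyMeasurable_exp_neg_mul_smul {μ ν : Measure ℝ} [SFinite ν]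
    (hf : AEStronglyMeasurable f ν) (c : ℝ) : AEStronglyMeasurable
      (fun p : ℝ × ℝ => Real.exp (-(c * p.1 * p.2)) • f p.2) (μ.prod ν) :=
  AEStronglyMeasurable.smul (by fun_prop) hf.comp_snd

lemma aestronglyMeasurable_laplace_const_mul {μ : Measure ℝ}
    (hf : AEStronglyMeasurable f (volume.restrict (Set.Ioi 0))) (c : ℝ) :
    AEStronglyMeasurable (fun x => laplace f (c * x)) μ :=
  (aestronglyMeasurable_exp_neg_mul_smul hf c).integral_prod_right'

lemma tendsto_laplace_zero (hf : IntegrableOn f (Set.Ioi 0)) :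
    Tendsto (laplace f) (𝓝[≥] 0) (𝓝 (∫ x in Set.Ioi 0, f x)) := by
  refine tendsto_integral_filter_of_dominated_convergence (fun x => ‖f x‖) ?_ ?_ hf.norm ?_
  · exact Eventually.of_forall fun a => AEStronglyMeasurable.smul
      (Continuous.aestronglyMeasurable (by fun_prop)) hf.aestronglyMeasurable
  · filter_upwards [self_mem_nhdsWithin] with a ha
    filter_upwards [ae_restrict_mem measurableSet_Ioi] with x hx
    exact norm_exp_neg_mul_smul_le ha (le_of_lt hx) _
  · refine ae_of_all _ fun x => tendsto_nhdsWithin_of_tendsto_nhds ?_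
    have hcont : Continuous fun a : ℝ => Real.exp (-(a * x)) • f x := by fun_prop
    simpa using hcont.tendsto 0

lemma laplace_clm_comp {G : Type*} [NormedAddCommGroup G] [NormedSpace ℝ G] [CompleteSpace E]
    [CompleteSpace G] (L : E →L[ℝ] G)
    (hf : IntegrableOn (fun x => Real.exp (-(a * x)) • f x) (Set.Ioi 0)) :
    laplace (fun x => L (f x)) a = L (laplace f a) := by
  rw [laplace, laplace, ← L.integral_comp_comm hf]
  simp only [map_smul]

end Laplace

section Abel

variable {F : ℝ → ℝ} {B : ℝ}

/-- Integrating by parts, `∫ e^{-at} F` over `[0, x]` minus the boundary term `e^{-ax} P x` is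
`a ∫ e^{-at} P`, where `P x = ∫₀ˣ F`; bounds on `P` make it monotone. -/
lemma monotoneOn_integral_exp_neg_mul_sub {a m X T : ℝ} (ha : 0 ≤ a) (hX : 0 ≤ X) (hXT : X ≤ T)
    (hF : ContinuousOn F (Set.Ioi 0)) (hB : ∀ x > 0, ‖F x‖ ≤ B)
    (hm : ∀ x ∈ Set.Ioo X T, m ≤ ∫ t in (0 : ℝ)..x, F t) :
    MonotoneOn (fun x => (∫ t in (0 : ℝ)..x, Real.exp (-(a * t)) • F t) -
      Real.exp (-(a * x)) * ((∫ t in (0 : ℝ)..x, F t) - m)) (Set.Icc X T) := by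
  have hexpF : ContinuousOn (fun t => Real.exp (-(a * t)) • F t) (Set.Ioi 0) := by fun_prop
  have hexpB : ∀ t > 0, ‖Real.exp (-(a * t)) • F t‖ ≤ B := fun t ht =>
    (norm_exp_neg_mul_smul_le ha (le_of_lt ht) _).trans (hB t ht)
  have hsub : Set.Icc X T ⊆ Set.uIcc 0 T := by
    rw [Set.uIcc_of_le (hX.trans hXT)]
    exact Set.Icc_subset_Icc_left hX
  have hprim : ∀ {f : ℝ → ℝ}, ContinuousOn f (Set.Ioi 0) → (∀ t > 0, ‖f t‖ ≤ B) →
      ContinuousOn (fun x => ∫ t in (0 : ℝ)..x, f t) (Set.Icc X T) := fun hf hfB =>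
    (intervalIntegral.continuousOn_primitive_interval'
      (intervalIntegrable_of_continuousOn_Ioi_of_norm_le hf hfB (hX.trans hXT))
      Set.left_mem_uIcc).mono hsub
  refine monotoneOn_of_hasDerivWithinAt_nonneg (convex_Icc X T)
    (f' := fun x => a * Real.exp (-(a * x)) * ((∫ t in (0 : ℝ)..x, F t) - m))
    ((hprim hexpF hexpB).sub (ContinuousOn.mul (by fun_prop) ((hprim hF hB).sub
      continuousOn_const))) ?_ ?_ <;> rw [interior_Icc] <;> intro x hx
  · have hx0 : 0 < x := hX.trans_lt hx.1
    refine HasDerivAt.hasDerivWithinAt (((hasDerivAt_integral_of_continuousOn_Ioi_of_norm_le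
      hexpF hexpB hx0).sub (((hasDerivAt_id' x).const_mul a).neg.exp.mul
      ((hasDerivAt_integral_of_continuousOn_Ioi_of_norm_le hF hB hx0).sub_const m))).congr_deriv
      ?_)
    simp only [Pi.neg_apply, smul_eq_mul]
    ring
  · have := sub_nonneg.mpr (hm x hx)
    positivity

lemma le_integral_exp_neg_mul {a m K X T : ℝ} (ha : 0 ≤ a) (hX : 0 ≤ X) (hXT : X ≤ T)
    (hF : ContinuousOn F (Set.Ioi 0)) (hB : ∀ x > 0, ‖F x‖ ≤ B)
    (hK : ∀ x ∈ Set.Ioo 0 X, K ≤ ∫ t in (0 : ℝ)..x, F t)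
    (hm : ∀ x ≥ X, m ≤ ∫ t in (0 : ℝ)..x, F t) :
    K + (m - K) * Real.exp (-(a * X)) ≤ ∫ t in (0 : ℝ)..T, Real.exp (-(a * t)) • F t := by
  have hleft := monotoneOn_integral_exp_neg_mul_sub ha le_rfl hX hF hB hK
    (Set.left_mem_Icc.mpr hX) (Set.right_mem_Icc.mpr hX) hX
  have hright := monotoneOn_integral_exp_neg_mul_sub ha hX hXT hF hB
    (fun x hx => hm x hx.1.le) (Set.left_mem_Icc.mpr hXT) (Set.right_mem_Icc.mpr hXT) hXT
  have hboundary : 0 ≤ Real.exp (-(a * T)) * ((∫ t in (0 : ℝ)..T, F t) - m) :=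
    mul_nonneg (Real.exp_pos _).le (sub_nonneg.mpr (hm T hXT))
  simp only [intervalIntegral.integral_same, mul_zero, neg_zero, Real.exp_zero] at hleft
  linarith

lemma norm_integral_exp_neg_mul_le {a S T : ℝ} (ha : 0 ≤ a) (hT : 0 ≤ T)
    (hF : ContinuousOn F (Set.Ioi 0)) (hB : ∀ x > 0, ‖F x‖ ≤ B)
    (hS : ∀ x ≥ 0, ‖∫ t in (0 : ℝ)..x, F t‖ ≤ S) :
    ‖∫ t in (0 : ℝ)..T, Real.exp (-(a * t)) • F t‖ ≤ S := by
  have hlower : ∀ {G : ℝ → ℝ}, ContinuousOn G (Set.Ioi 0) → (∀ x > 0, ‖G x‖ ≤ B) →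
      (∀ x ≥ 0, -S ≤ ∫ t in (0 : ℝ)..x, G t) →
      -S ≤ ∫ t in (0 : ℝ)..T, Real.exp (-(a * t)) • G t := fun hG hGB hGS => by
    simpa using le_integral_exp_neg_mul (K := -S) ha le_rfl hT hG hGB (by simp) hGS
  rw [Real.norm_eq_abs, abs_le]
  refine ⟨hlower hF hB fun x hx => (abs_le.mp (hS x hx)).1, ?_⟩
  have hneg := hlower (G := fun x => -F x) hF.neg (by simpa only [norm_neg] using hB) fun x hx => by
    rw [intervalIntegral.integral_neg]
    exact neg_le_neg (abs_le.mp (hS x hx)).2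
  simpa only [smul_neg, intervalIntegral.integral_neg, neg_le_neg_iff] using hneg

lemma norm_integral_le_mul_of_norm_le {T : ℝ} (hB : ∀ x > 0, ‖F x‖ ≤ B) (hT : 0 ≤ T) :
    ‖∫ x in (0 : ℝ)..T, F x‖ ≤ B * T := by
  simpa [abs_of_nonneg hT] using intervalIntegral.norm_integral_le_of_norm_le_const
    (f := F) (a := 0) (b := T) fun x hx => hB x (Set.uIoc_of_le hT ▸ hx).1

lemma exists_norm_integral_le_of_tendsto {Λ : ℝ} (hB : ∀ x > 0, ‖F x‖ ≤ B)
    (hP : Tendsto (fun T => ∫ x in (0 : ℝ)..T, F x) atTop (𝓝 Λ)) :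
    ∃ S : ℝ, ∀ T ≥ 0, ‖∫ x in (0 : ℝ)..T, F x‖ ≤ S := by
  obtain ⟨X, hX⟩ := eventually_atTop.mp (hP.norm.eventually_le_const (lt_add_one ‖Λ‖))
  have hB0 : 0 ≤ B := (norm_nonneg _).trans (hB 1 one_pos)
  refine ⟨max (B * X) (‖Λ‖ + 1), fun T hT => ?_⟩
  rcases le_total T X with hTX | hXT
  · exact ((norm_integral_le_mul_of_norm_le hB hT).trans (by gcongr)).trans (le_max_left _ _)
  · exact (hX T hXT).trans (le_max_right _ _)

lemma exists_le_laplace_of_eventually_le {m : ℝ} (hF : ContinuousOn F (Set.Ioi 0))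
    (hB : ∀ x > 0, ‖F x‖ ≤ B) (hm : ∀ᶠ T in atTop, m ≤ ∫ x in (0 : ℝ)..T, F x) :
    ∃ K X : ℝ, 0 ≤ X ∧ ∀ a > 0, K + (m - K) * Real.exp (-(X * a)) ≤ laplace F a := by
  obtain ⟨X, hX⟩ := eventually_atTop.mp (hm.and (eventually_ge_atTop 0))
  have hX0 : 0 ≤ X := (hX X le_rfl).2
  have hB0 : 0 ≤ B := (norm_nonneg _).trans (hB 1 one_pos)
  refine ⟨-(B * X), X, hX0, fun a ha => ?_⟩
  refine ge_of_tendsto (intervalIntegral_tendsto_integral_Ioi 0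
    (integrableOn_exp_neg_mul_smul_of_norm_le ha hF hB) tendsto_id) ?_
  filter_upwards [eventually_ge_atTop X] with T hT
  rw [mul_comm X a]
  refine le_integral_exp_neg_mul ha.le hX0 hT hF hB (fun x hx => ?_) fun x hx => (hX x hx).1
  refine le_trans (neg_le_neg ?_) (neg_le_of_abs_le (norm_integral_le_mul_of_norm_le hB hx.1.le))
  gcongr
  exact hx.2.le

end Abel

section AbelMean

/-- A probability density on `(0, ∞)` against which Laplace transforms of bounded functions,
of size `1 / x` at the origin, can be averaged. -/
structure IsAbelWeight (w : ℝ → ℝ) : Prop where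
  nonneg : ∀ x > 0, 0 ≤ w x
  integrableOn : IntegrableOn w (Set.Ioi 0)
  integral_eq_one : ∫ x in Set.Ioi 0, w x = 1
  integrableOn_div : IntegrableOn (fun x => w x / x) (Set.Ioi 0)

/-- The mean of the rescaled Laplace transform `x ↦ laplace F (ε x)` against the weight `w`. As
`ε → 0` it assigns an Abel-type value to the improper integral of `F`. -/
noncomputable def abelMean (w F : ℝ → ℝ) (ε : ℝ) : ℝ :=
  ∫ x in Set.Ioi 0, w x * laplace F (ε * x)

variable {w F : ℝ → ℝ} {B ε Λ : ℝ}

lemma abelMean_neg (w F : ℝ → ℝ) (ε : ℝ) : abelMean w (fun x => -F x) ε = -abelMean w F ε := by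
  simp only [abelMean, laplace, smul_neg, integral_neg, mul_neg]

lemma IsAbelWeight.integrableOn_mul_laplace (hw : IsAbelWeight w)
    (hF : ContinuousOn F (Set.Ioi 0)) (hB : ∀ x > 0, ‖F x‖ ≤ B) (hε : 0 < ε) :
    IntegrableOn (fun x => w x * laplace F (ε * x)) (Set.Ioi 0) := by
  refine Integrable.mono' (hw.integrableOn_div.mul_const (B / ε))
    (hw.integrableOn.aestronglyMeasurable.mul (aestronglyMeasurable_laplace_const_mul
      (hF.aestronglyMeasurable measurableSet_Ioi) ε)) ?_
  filter_upwards [ae_restrict_mem measurableSet_Ioi] with x hx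
  rw [norm_mul, Real.norm_of_nonneg (hw.nonneg x hx), div_mul_div_comm, mul_comm x ε,
    ← mul_div_assoc']
  exact mul_le_mul_of_nonneg_left (norm_laplace_le (mul_pos hε hx) hB) (hw.nonneg x hx)

lemma IsAbelWeight.le_of_eventually_le_integral (hw : IsAbelWeight w)
    (hF : ContinuousOn F (Set.Ioi 0)) (hB : ∀ x > 0, ‖F x‖ ≤ B)
    (hΛ : Tendsto (abelMean w F) (𝓝[>] 0) (𝓝 Λ)) {m : ℝ}
    (hm : ∀ᶠ T in atTop, m ≤ ∫ x in (0 : ℝ)..T, F x) : m ≤ Λ := by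
  obtain ⟨K, X, hX, hlower⟩ := exists_le_laplace_of_eventually_le hF hB hm
  have hmean : ∀ ε > 0, K + (m - K) * laplace w (ε * X) ≤ abelMean w F ε := fun ε hε => by
    have hexp : IntegrableOn (fun x => Real.exp (-(ε * X * x)) * w x) (Set.Ioi 0) :=
      hw.integrableOn.norm.mono' (AEStronglyMeasurable.mul (by fun_prop)
        hw.integrableOn.aestronglyMeasurable) (by
          filter_upwards [ae_restrict_mem measurableSet_Ioi] with x hx
          exact norm_exp_neg_mul_smul_le (by positivity) (le_of_lt hx) (w x))
    have hK : ∫ x in Set.Ioi 0, (K * w x + (m - K) * (Real.exp (-(ε * X * x)) * w x)) =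
        K + (m - K) * laplace w (ε * X) := by
      rw [integral_add (hw.integrableOn.const_mul K) (hexp.const_mul (m - K)), integral_const_mul,
        integral_const_mul, hw.integral_eq_one, mul_one]
      simp only [laplace, smul_eq_mul]
    rw [← hK]
    refine setIntegral_mono_on ((hw.integrableOn.const_mul K).add (hexp.const_mul (m - K)))
      (hw.integrableOn_mul_laplace hF hB hε) measurableSet_Ioi fun x hx => ?_
    refine le_of_eq_of_le ?_
      (mul_le_mul_of_nonneg_left (hlower (ε * x) (mul_pos hε hx)) (hw.nonneg x hx))
    rw [show X * (ε * x) = ε * X * x by ring]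
    ring
  have hscale : Tendsto (fun ε => ε * X) (𝓝[>] 0) (𝓝[≥] 0) := by
    refine tendsto_nhdsWithin_iff.mpr ⟨tendsto_nhdsWithin_of_tendsto_nhds ?_, ?_⟩
    · exact (continuous_mul_const X).tendsto' 0 0 (zero_mul X)
    · filter_upwards [self_mem_nhdsWithin] with ε hε
      exact mul_nonneg (le_of_lt hε) hX
  have hlim := (((tendsto_laplace_zero hw.integrableOn).comp hscale).const_mul (m - K)).const_add K
  rw [hw.integral_eq_one, mul_one, add_sub_cancel] at hlim
  exact le_of_tendsto_of_tendsto hlim hΛ (eventually_nhdsWithin_of_forall hmean)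

lemma IsAbelWeight.ge_of_eventually_integral_le (hw : IsAbelWeight w)
    (hF : ContinuousOn F (Set.Ioi 0)) (hB : ∀ x > 0, ‖F x‖ ≤ B)
    (hΛ : Tendsto (abelMean w F) (𝓝[>] 0) (𝓝 Λ)) {m : ℝ}
    (hm : ∀ᶠ T in atTop, ∫ x in (0 : ℝ)..T, F x ≤ m) : Λ ≤ m := by
  refine neg_le_neg_iff.mp (hw.le_of_eventually_le_integral hF.neg
    (by simpa only [Pi.neg_apply, norm_neg] using hB) (hΛ.neg.congr fun ε => ?_)
    (hm.mono fun T hT => ?_))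
  · exact (abelMean_neg w F ε).symm
  · simpa only [Pi.neg_apply, intervalIntegral.integral_neg, neg_le_neg_iff] using hT

/-- Eventual bounds on `∫₀ᵀ F` pass to the Abel value `Λ`, so a nonzero drift `e` would make `Λ`
infinite. -/
theorem IsAbelWeight.tendsto_integral_of_tendsto_abelMean (hw : IsAbelWeight w)
    (hF : ContinuousOn F (Set.Ioi 0)) (hB : ∀ x > 0, ‖F x‖ ≤ B)
    (hΛ : Tendsto (abelMean w F) (𝓝[>] 0) (𝓝 Λ)) {e l : ℝ}
    (hP : Tendsto (fun T => (∫ x in (0 : ℝ)..T, F x) - e * Real.log T) atTop (𝓝 l)) :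
    Tendsto (fun T => ∫ x in (0 : ℝ)..T, F x) atTop (𝓝 Λ) := by
  have hlower : ∀ m, (∀ᶠ T in atTop, m ≤ ∫ x in (0 : ℝ)..T, F x) → m ≤ Λ := fun _ =>
    hw.le_of_eventually_le_integral hF hB hΛ
  have hupper : ∀ m, (∀ᶠ T in atTop, ∫ x in (0 : ℝ)..T, F x ≤ m) → Λ ≤ m := fun _ =>
    hw.ge_of_eventually_integral_le hF hB hΛ
  rcases lt_trichotomy e 0 with he | rfl | he
  · have hbot :=
      (hP.add_atBot (Real.tendsto_log_atTop.const_mul_atTop_of_neg he)).eventually_le_atBot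
    simp only [sub_add_cancel] at hbot
    exact absurd (hupper _ (hbot (Λ - 1))) (by simp)
  · simp only [zero_mul, sub_zero] at hP
    obtain rfl : l = Λ := le_antisymm
      (le_of_forall_lt_imp_le_of_dense fun m hm => hlower m (hP.eventually_const_le hm))
      (le_of_forall_gt_imp_ge_of_dense fun m hm => hupper m (hP.eventually_le_const hm))
    exact hP
  · have htop := (hP.add_atTop (Real.tendsto_log_atTop.const_mul_atTop he)).eventually_ge_atTop
    simp only [sub_add_cancel] at htop
    exact absurd (hlower _ (htop (Λ + 1))) (by simp)

lemma IsAbelWeight.integrable_prod_mul_exp_mul (hw : IsAbelWeight w)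
    (hF : ContinuousOn F (Set.Ioi 0)) (hB : ∀ x > 0, ‖F x‖ ≤ B) (hε : 0 ≤ ε) {T : ℝ}
    (hT : 0 ≤ T) : Integrable (fun p : ℝ × ℝ => w p.1 * (Real.exp (-(ε * p.1 * p.2)) • F p.2))
      ((volume.restrict (Set.Ioi 0)).prod (volume.restrict (Set.Ioc 0 T))) := by
  have hFint : IntegrableOn F (Set.Ioc 0 T) :=
    (intervalIntegrable_iff_integrableOn_Ioc_of_le hT).mp
      (intervalIntegrable_of_continuousOn_Ioi_of_norm_le hF hB hT)
  refine Integrable.mono (hw.integrableOn.mul_prod hFint)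
    (hw.integrableOn.aestronglyMeasurable.comp_fst.mul
      (aestronglyMeasurable_exp_neg_mul_smul hFint.aestronglyMeasurable ε)) ?_
  rw [Measure.prod_restrict]
  filter_upwards [ae_restrict_mem (measurableSet_Ioi.prod measurableSet_Ioc)] with p hp
  rw [norm_mul, norm_mul]
  gcongr
  exact norm_exp_neg_mul_smul_le (mul_nonneg hε (le_of_lt hp.1)) hp.2.1.le _

lemma IsAbelWeight.tendsto_integral_integral_exp_mul (hw : IsAbelWeight w)
    (hF : ContinuousOn F (Set.Ioi 0)) (hB : ∀ x > 0, ‖F x‖ ≤ B)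
    (hP : Tendsto (fun T => ∫ x in (0 : ℝ)..T, F x) atTop (𝓝 Λ)) (hε : 0 < ε) :
    Tendsto (fun T => ∫ y in Set.Ioi 0, w y * ∫ x in (0 : ℝ)..T, Real.exp (-(ε * y * x)) • F x)
      atTop (𝓝 (abelMean w F ε)) := by
  obtain ⟨S, hS⟩ := exists_norm_integral_le_of_tendsto hB hP
  refine tendsto_integral_filter_of_dominated_convergence (fun y => w y * S) ?_ ?_
    (hw.integrableOn.mul_const S) ?_
  · filter_upwards [eventually_ge_atTop 0] with T hT
    simp only [intervalIntegral.integral_of_le hT]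
    exact hw.integrableOn.aestronglyMeasurable.mul (aestronglyMeasurable_exp_neg_mul_smul
      ((hF.mono Set.Ioc_subset_Ioi_self).aestronglyMeasurable measurableSet_Ioc)
      ε).integral_prod_right'
  · filter_upwards [eventually_ge_atTop 0] with T hT
    filter_upwards [ae_restrict_mem measurableSet_Ioi] with y hy
    rw [norm_mul, Real.norm_of_nonneg (hw.nonneg y hy)]
    exact mul_le_mul_of_nonneg_left
      (norm_integral_exp_neg_mul_le (mul_pos hε hy).le hT hF hB hS) (hw.nonneg y hy)
  · filter_upwards [ae_restrict_mem measurableSet_Ioi] with y hy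
    exact (intervalIntegral_tendsto_integral_Ioi 0
      (integrableOn_exp_neg_mul_smul_of_norm_le (mul_pos hε hy) hF hB) tendsto_id).const_mul _

theorem IsAbelWeight.tendsto_integral_one_sub_laplace_mul (hw : IsAbelWeight w)
    (hF : ContinuousOn F (Set.Ioi 0)) (hB : ∀ x > 0, ‖F x‖ ≤ B)
    (hP : Tendsto (fun T => ∫ x in (0 : ℝ)..T, F x) atTop (𝓝 Λ)) (hε : 0 < ε) :
    Tendsto (fun T => ∫ x in (0 : ℝ)..T, (1 - laplace w (ε * x)) * F x) atTop
      (𝓝 (Λ - abelMean w F ε)) := by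
  refine (hP.sub (hw.tendsto_integral_integral_exp_mul hF hB hP hε)).congr' ?_
  filter_upwards [eventually_ge_atTop 0] with T hT
  have hprod := hw.integrable_prod_mul_exp_mul hF hB hε.le hT
  have hlaplace : ∀ x, ∫ y in Set.Ioi 0, w y * (Real.exp (-(ε * y * x)) • F x) =
      laplace w (ε * x) * F x := fun x => by
    rw [laplace, ← integral_mul_const]
    refine integral_congr_ae (ae_of_all _ fun y => ?_)
    simp only [smul_eq_mul, mul_right_comm ε]
    ring
  have hFint : IntegrableOn F (Set.Ioc 0 T) :=
    (intervalIntegrable_iff_integrableOn_Ioc_of_le hT).mp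
      (intervalIntegrable_of_continuousOn_Ioi_of_norm_le hF hB hT)
  have hlaplaceint : IntegrableOn (fun x => laplace w (ε * x) * F x) (Set.Ioc 0 T) :=
    hprod.integral_prod_right.congr (ae_of_all _ hlaplace)
  simp only [intervalIntegral.integral_of_le hT, one_sub_mul, ← integral_const_mul]
  rw [integral_sub hFint hlaplaceint, integral_integral_swap hprod]
  simp only [hlaplace]

end AbelMean

/-! ### Neumann's formula -/

section Neumann

open scoped Nat Real

lemma Gamma_add_natCast_eq_choose {s : ℂ} (hs : 0 < s.re) (n : ℕ) :
    Complex.Gamma (s + n) = n ! * Ring.choose (s + n - 1) n * Complex.Gamma s := by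
  have hne : ∀ k : ℕ, s ≠ -k := by
    rintro k rfl
    simp only [Complex.neg_re, Complex.natCast_re] at hs
    linarith [k.cast_nonneg (α := ℝ)]
  rw [← div_eq_iff (Complex.Gamma_ne_zero_of_re_pos hs), Complex.Gamma_add_nat_div_Gamma_eq s hne,
    ← Ring.multichoose_eq, ← nsmul_eq_mul, Ring.factorial_nsmul_multichoose_eq_ascPochhammer,
    Polynomial.ascPochhammer_smeval_eq_eval]

lemma re_add_natCast_add_one_pos {ν : ℂ} (hν : 0 ≤ ν.re) (k : ℕ) : 0 < (ν + k + 1).re := by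
  simp only [Complex.add_re, Complex.natCast_re, Complex.one_re]
  positivity

variable {ν : ℂ}

lemma sum_antidiagonal_besselClifford_coeff (hν : 0 ≤ ν.re) (k : ℕ) :
    ∑ p ∈ Finset.HasAntidiagonal.antidiagonal k,
      (p.1 ! * Complex.Gamma (ν + p.1 + 1))⁻¹ * (p.2 ! * Complex.Gamma (ν + p.2 + 1))⁻¹ =
    Complex.Gamma (2 * ν + 2 * k + 1) /
      (k ! * Complex.Gamma (ν + k + 1) ^ 2 * Complex.Gamma (2 * ν + k + 1)) := by
  have hGamma := fun i : ℕ =>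
    Complex.Gamma_ne_zero_of_re_pos (re_add_natCast_add_one_pos hν i)
  have hre_two := re_add_natCast_add_one_pos (ν := 2 * ν) (by simpa using hν) k
  have hvandermonde : Complex.Gamma (2 * ν + 2 * k + 1) =
      k ! * (∑ p ∈ Finset.HasAntidiagonal.antidiagonal k,
        Ring.choose (ν + k) p.1 * Ring.choose (ν + k) p.2) * Complex.Gamma (2 * ν + k + 1) := by
    rw [← Ring.add_choose_eq k (Commute.all _ _), show ν + k + (ν + k) = 2 * ν + k + 1 + k - 1 by
      ring, ← Gamma_add_natCast_eq_choose hre_two]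
    ring_nf
  have hshift : ∀ i j : ℕ, i + j = k → Complex.Gamma (ν + k + 1) =
      i ! * Ring.choose (ν + k) i * Complex.Gamma (ν + j + 1) := by
    rintro i j rfl
    have hij : ν + (i + j : ℕ) = ν + j + 1 + i - 1 := by push_cast; ring
    rw [hij, sub_add_cancel, Gamma_add_natCast_eq_choose (re_add_natCast_add_one_pos hν j)]
  rw [hvandermonde, eq_div_iff (by simp [hGamma, k.factorial_ne_zero,
    Complex.Gamma_ne_zero_of_re_pos hre_two]), Finset.mul_sum, Finset.sum_mul, Finset.sum_mul]
  refine Finset.sum_congr rfl fun p hp => ?_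
  have hp' := Finset.HasAntidiagonal.mem_antidiagonal.mp hp
  have hsq : Complex.Gamma (ν + k + 1) ^ 2 =
      (p.1 ! * Ring.choose (ν + k) p.1 * Complex.Gamma (ν + p.2 + 1)) *
      (p.2 ! * Ring.choose (ν + k) p.2 * Complex.Gamma (ν + p.1 + 1)) := by
    rw [← hshift _ _ hp', ← hshift _ _ ((add_comm _ _).trans hp'), sq]
  have hfact : ∀ i : ℕ, (i ! : ℂ) ≠ 0 := fun i => Nat.cast_ne_zero.mpr i.factorial_ne_zero
  have hGamma_fst := hGamma p.1
  have hGamma_snd := hGamma p.2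
  have hfact_fst := hfact p.1
  have hfact_snd := hfact p.2
  rw [hsq]
  field_simp

lemma hasSum_besselClifford_sq (hν : 0 ≤ ν.re) (z : ℂ) :
    HasSum (fun k : ℕ => Complex.Gamma (2 * ν + 2 * k + 1) /
      (k ! * Complex.Gamma (ν + k + 1) ^ 2 * Complex.Gamma (2 * ν + k + 1)) * z ^ k)
      (besselClifford ν z ^ 2) := by
  obtain ⟨C, hC⟩ := exists_norm_besselClifford_coeff_le ν
  have hsum := (summable_expSeries hC z).norm
  have hprod := summable_norm_sum_mul_antidiagonal_of_summable_norm hsum hsum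
  rw [sq, besselClifford, expSeries,
    tsum_mul_tsum_eq_tsum_sum_antidiagonal_of_summable_norm hsum hsum]
  refine hprod.of_norm.hasSum.congr_fun fun k => ?_
  rw [← sum_antidiagonal_besselClifford_coeff hν, Finset.sum_mul]
  refine Finset.sum_congr rfl fun p hp => ?_
  rw [← Finset.HasAntidiagonal.mem_antidiagonal.mp hp, pow_add]
  simp only [mul_inv]
  ring

lemma integral_half_cos_cpow (s : ℂ) :
    ∫ θ in Set.Ioo (-(π / 2)) (π / 2), ((Real.cos θ / 2 : ℝ) : ℂ) ^ (2 * s) =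
      Complex.betaIntegral (s + 1 / 2) (s + 1 / 2) := by
  have hsubst := integral_Icc_deriv_smul_of_deriv_nonneg (a := -(π / 2)) (b := π / 2)
    (f := fun θ => (1 + Real.sin θ) / 2) (f' := fun θ => Real.cos θ / 2)
    (g := fun t : ℝ => (t : ℂ) ^ (s + 1 / 2 - 1) * (1 - (t : ℂ)) ^ (s + 1 / 2 - 1))
    (by fun_prop) (fun θ _ => ((Real.hasDerivAt_sin θ).const_add 1).div_const 2)
    (fun θ hθ => by have := Real.cos_pos_of_mem_Ioo hθ; positivity) (by linarith [Real.pi_pos])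
  norm_num only [Real.sin_neg, Real.sin_pi_div_two] at hsubst
  rw [Complex.betaIntegral, intervalIntegral.integral_of_le zero_le_one,
    ← integral_Icc_eq_integral_Ioc]
  norm_num only
  rw [← hsubst, integral_Icc_eq_integral_Ioo]
  refine setIntegral_congr_fun measurableSet_Ioo fun θ hθ => ?_
  have hcos := Real.cos_pos_of_mem_Ioo hθ
  have hc : ((Real.cos θ / 2 : ℝ) : ℂ) ≠ 0 := by exact_mod_cast (half_pos hcos).ne'
  have hfactor : (1 + Real.sin θ) / 2 * (1 - (1 + Real.sin θ) / 2) =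
      Real.cos θ / 2 * (Real.cos θ / 2) := by
    linear_combination -(Real.sin_sq_add_cos_sq θ) / 4
  have hexp : 2 * s = 1 + (s + 1 / 2 - 1) + (s + 1 / 2 - 1) := by ring
  rw [← Complex.ofReal_one, ← Complex.ofReal_sub,
    ← Complex.mul_cpow_ofReal_nonneg (by linarith [Real.neg_one_le_sin θ])
      (by linarith [Real.sin_le_one θ]), ← Complex.ofReal_mul, hfactor, Complex.ofReal_mul,
    Complex.mul_cpow_ofReal_nonneg (by positivity) (by positivity), hexp, Complex.cpow_add _ _ hc,
    Complex.cpow_add _ _ hc, Complex.cpow_one, Complex.real_smul, Complex.ofReal_one, mul_assoc]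

lemma Gamma_add_half_mul_Gamma_add_one (s : ℂ) :
    Complex.Gamma (s + 1 / 2) * Complex.Gamma (s + 1) * 2 ^ (2 * s) =
      Complex.Gamma (2 * s + 1) * √π := by
  have hdup := Complex.Gamma_mul_Gamma_add_half (s + 1 / 2)
  rw [show s + 1 / 2 + 1 / 2 = s + 1 by ring, show 2 * (s + 1 / 2) = 2 * s + 1 by ring,
    show 1 - (2 * s + 1) = -(2 * s) by ring, Complex.cpow_neg] at hdup
  have htwo : (2 : ℂ) ^ (2 * s) ≠ 0 := by simp [Complex.cpow_eq_zero_iff]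
  rw [hdup]
  field_simp

lemma integral_two_cos_cpow {s : ℂ} (hs : -(1 / 2) < s.re) :
    ∫ θ in Set.Ioo (-(π / 2)) (π / 2), ((2 * Real.cos θ : ℝ) : ℂ) ^ (2 * s) =
      π * (Complex.Gamma (2 * s + 1) / Complex.Gamma (s + 1) ^ 2) := by
  have hhalf : 0 < (s + 1 / 2).re := by simpa using by linarith
  have hscale : ∀ θ ∈ Set.Ioo (-(π / 2)) (π / 2), ((2 * Real.cos θ : ℝ) : ℂ) ^ (2 * s) =
      4 ^ (2 * s) * ((Real.cos θ / 2 : ℝ) : ℂ) ^ (2 * s) := by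
    intro θ hθ
    have hcos := Real.cos_pos_of_mem_Ioo hθ
    rw [← Complex.ofReal_ofNat 4, ← Complex.mul_cpow_ofReal_nonneg (by norm_num) (by positivity),
      ← Complex.ofReal_mul]
    ring_nf
  have hbeta := Complex.Gamma_mul_Gamma_eq_betaIntegral hhalf hhalf
  rw [show s + 1 / 2 + (s + 1 / 2) = 2 * s + 1 by ring] at hbeta
  have hGamma : Complex.Gamma (s + 1) ≠ 0 :=
    Complex.Gamma_ne_zero_of_re_pos (by simpa using (by linarith : 0 < s.re + 1))
  have hGamma_two : Complex.Gamma (2 * s + 1) ≠ 0 :=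
    Complex.Gamma_ne_zero_of_re_pos (by simpa using (by linarith : 0 < 2 * s.re + 1))
  have hfour : (4 : ℂ) ^ (2 * s) = 2 ^ (2 * s) * 2 ^ (2 * s) := by
    have := Complex.mul_cpow_ofReal_nonneg zero_le_two zero_le_two (2 * s)
    norm_num at this
    exact this
  have hsqrt : (√π : ℂ) ^ 2 = π := by rw [← Complex.ofReal_pow, Real.sq_sqrt Real.pi_pos.le]
  rw [setIntegral_congr_fun measurableSet_Ioo hscale, integral_const_mul, integral_half_cos_cpow,
    hfour, ← hsqrt, ← mul_div_assoc, eq_div_iff (pow_ne_zero 2 hGamma),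
    ← mul_right_inj' hGamma_two]
  have hdup := Gamma_add_half_mul_Gamma_add_one s
  linear_combination -(2 ^ (2 * s) * 2 ^ (2 * s) * Complex.Gamma (s + 1) ^ 2) * hbeta +
    (Complex.Gamma (s + 1 / 2) * Complex.Gamma (s + 1) * 2 ^ (2 * s) +
      Complex.Gamma (2 * s + 1) * √π) * hdup

lemma hasSum_two_cos_cpow_mul_besselClifford (z : ℂ) {θ : ℝ} (hθ : 0 < Real.cos θ) :
    HasSum (fun k : ℕ => (Complex.Gamma (2 * ν + k + 1))⁻¹ * (z ^ k / k !) *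
      ((2 * Real.cos θ : ℝ) : ℂ) ^ (2 * (ν + k)))
      (((2 * Real.cos θ : ℝ) : ℂ) ^ (2 * ν) *
        besselClifford (2 * ν) (z * ((2 * Real.cos θ : ℝ) : ℂ) ^ 2)) := by
  obtain ⟨C, hC⟩ := exists_norm_besselClifford_coeff_le (2 * ν)
  have hc : ((2 * Real.cos θ : ℝ) : ℂ) ≠ 0 := by exact_mod_cast (mul_pos two_pos hθ).ne'
  refine ((summable_expSeries hC _).hasSum.mul_left _).congr_fun fun k => ?_
  rw [mul_add, Complex.cpow_add _ _ hc, show (2 * k : ℂ) = (2 * k : ℕ) by push_cast; rfl,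
    Complex.cpow_natCast, mul_pow, ← pow_mul]
  ring

lemma norm_two_cos_cpow_mul_coeff_le (hν : 0 ≤ ν.re) {C : ℝ} (z : ℂ) {k : ℕ}
    (hC : ‖(Complex.Gamma (2 * ν + k + 1))⁻¹‖ ≤ C) {θ : ℝ} (hθ : 0 < Real.cos θ) :
    ‖(Complex.Gamma (2 * ν + k + 1))⁻¹ * (z ^ k / k !) *
      ((2 * Real.cos θ : ℝ) : ℂ) ^ (2 * (ν + k))‖ ≤
    C * 2 ^ (2 * ν.re) * ((‖z‖ * 2 ^ 2) ^ k / k !) := by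
  have hre : (2 * (ν + k)).re = 2 * ν.re + (2 * k : ℕ) := by
    simp only [Complex.mul_re, Complex.re_ofNat, Complex.im_ofNat, zero_mul, sub_zero,
      Complex.add_re, Complex.natCast_re]
    push_cast
    ring
  rw [norm_mul, norm_mul, norm_div, norm_pow, Complex.norm_natCast,
    Complex.norm_cpow_eq_rpow_re_of_pos (by positivity), hre]
  calc _ ≤ C * (‖z‖ ^ k / k !) * 2 ^ (2 * ν.re + (2 * k : ℕ)) := by
        have hC0 := (norm_nonneg _).trans hC
        have hcos1 : 2 * Real.cos θ ≤ 2 := by linarith [Real.cos_le_one θ]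
        gcongr
    _ = _ := by rw [Real.rpow_add two_pos, Real.rpow_natCast, mul_pow, ← pow_mul]; ring

lemma integral_two_cos_cpow_mul_besselClifford (hν : 0 ≤ ν.re) (z : ℂ) :
    ∫ θ in Set.Ioo (-(π / 2)) (π / 2), ((2 * Real.cos θ : ℝ) : ℂ) ^ (2 * ν) *
      besselClifford (2 * ν) (z * ((2 * Real.cos θ : ℝ) : ℂ) ^ 2) =
      π * besselClifford ν z ^ 2 := by
  obtain ⟨C, hC⟩ := exists_norm_besselClifford_coeff_le (2 * ν)
  have hterm : ∀ k : ℕ, ∫ θ in Set.Ioo (-(π / 2)) (π / 2),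
      (Complex.Gamma (2 * ν + k + 1))⁻¹ * (z ^ k / k !) *
        ((2 * Real.cos θ : ℝ) : ℂ) ^ (2 * (ν + k)) =
      π * (Complex.Gamma (2 * ν + 2 * k + 1) / (k ! * Complex.Gamma (ν + k + 1) ^ 2 *
        Complex.Gamma (2 * ν + k + 1)) * z ^ k) := by
    intro k
    have hk : -(1 / 2) < (ν + k).re := by
      simp only [Complex.add_re, Complex.natCast_re]
      linarith [k.cast_nonneg (α := ℝ)]
    rw [integral_const_mul, integral_two_cos_cpow hk, mul_add]
    ring
  have hbound_summable := (Real.summable_pow_div_factorial (‖z‖ * 2 ^ 2)).mul_left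
    (C * 2 ^ (2 * ν.re))
  have hsum := hasSum_integral_of_dominated_convergence
    (μ := volume.restrict (Set.Ioo (-(π / 2)) (π / 2)))
    (fun (k : ℕ) (_ : ℝ) => C * 2 ^ (2 * ν.re) * ((‖z‖ * 2 ^ 2) ^ k / k !))
    (fun k => Measurable.aestronglyMeasurable (by fun_prop))
    (fun k => ae_restrict_of_forall_mem measurableSet_Ioo fun θ hθ =>
      norm_two_cos_cpow_mul_coeff_le hν z (hC k) (Real.cos_pos_of_mem_Ioo hθ))
    (ae_of_all _ fun _ => hbound_summable) (integrable_const _)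
    (ae_restrict_of_forall_mem measurableSet_Ioo fun θ hθ =>
      hasSum_two_cos_cpow_mul_besselClifford z (Real.cos_pos_of_mem_Ioo hθ))
  simp only [hterm] at hsum
  exact hsum.unique ((hasSum_besselClifford_sq hν z).mul_left _)

theorem integral_besselJ_two_mul_cos (hν : 0 ≤ ν.re) {x : ℝ} (hx : 0 < x) :
    ∫ θ in Set.Ioo (-(π / 2)) (π / 2), besselJ (2 * ν) (2 * Real.cos θ * x) =
      π * besselJ ν x ^ 2 := by
  rw [besselJ_eq_exp_mul_besselClifford ν hx, mul_pow, mul_left_comm,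
    ← integral_two_cos_cpow_mul_besselClifford hν, ← integral_const_mul]
  refine setIntegral_congr_fun measurableSet_Ioo fun θ hθ => ?_
  have hcos : 0 < 2 * Real.cos θ := mul_pos two_pos (Real.cos_pos_of_mem_Ioo hθ)
  have hlog : Real.log (2 * Real.cos θ * x / 2) = Real.log (x / 2) + Real.log (2 * Real.cos θ) := by
    rw [← Real.log_mul (by positivity) hcos.ne']
    ring_nf
  rw [besselJ_eq_exp_mul_besselClifford _ (mul_pos hcos hx), hlog,
    Complex.cpow_def_of_ne_zero (by exact_mod_cast hcos.ne'), ← Complex.ofReal_log hcos.le,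
    ← mul_assoc, ← Complex.exp_nat_mul, ← Complex.exp_add]
  congr 2
  · push_cast
    ring
  · push_cast
    ring

end Neumann

/-! ### The Laplace transform of a Bessel function -/

section LaplaceDerivative

variable {E : Type*} [NormedAddCommGroup E] [NormedSpace ℝ E] {f : ℝ → E} {a B : ℝ}

lemma integrableOn_exp_neg_mul_id_smul_of_norm_le (ha : 0 < a) (hf : ContinuousOn f (Set.Ioi 0))
    (hB : ∀ x > 0, ‖f x‖ ≤ B) :
    IntegrableOn (fun x => Real.exp (-(a * x)) • x • f x) (Set.Ioi 0) := by
  have hbound : ∀ x > 0, ‖Real.exp (-(a / 2 * x)) • x • f x‖ ≤ 2 / a * B := by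
    intro x hx
    have hle : a / 2 * x ≤ Real.exp (a / 2 * x) := by linarith [Real.add_one_le_exp (a / 2 * x)]
    rw [norm_exp_neg_mul_smul, norm_smul, Real.norm_of_nonneg hx.le, ← mul_assoc, Real.exp_neg]
    gcongr
    · rw [inv_mul_le_iff₀ (Real.exp_pos _), ← div_le_iff₀ (by positivity)]
      rwa [div_div_eq_mul_div, mul_comm x a, mul_div_right_comm]
    · exact hB x hx
  have hcont : ContinuousOn (fun x => Real.exp (-(a / 2 * x)) • x • f x) (Set.Ioi 0) :=
    ContinuousOn.smul (by fun_prop) (continuousOn_id.smul hf)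
  refine (integrableOn_exp_neg_mul_smul_of_norm_le (half_pos ha) hcont hbound).congr_fun
    (fun x _ => ?_) measurableSet_Ioi
  beta_reduce
  rw [smul_smul, ← Real.exp_add]
  ring_nf

lemma hasDerivAt_laplace (ha : 0 < a) (hf : ContinuousOn f (Set.Ioi 0))
    (hB : ∀ x > 0, ‖f x‖ ≤ B) :
    HasDerivAt (laplace f) (-laplace (fun x => x • f x) a) a := by
  have hmeas : ∀ b : ℝ, AEStronglyMeasurable (fun x => Real.exp (-(b * x)) • f x)
      (volume.restrict (Set.Ioi 0)) := fun b =>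
    (ContinuousOn.smul (by fun_prop) hf).aestronglyMeasurable measurableSet_Ioi
  have hint := integrableOn_exp_neg_mul_id_smul_of_norm_le ha hf hB
  have hdom := integrableOn_exp_neg_mul_id_smul_of_norm_le (f := fun _ => B) (half_pos ha)
    continuousOn_const (B := ‖B‖) fun _ _ => le_rfl
  rw [laplace, ← integral_neg]
  refine (hasDerivAt_integral_of_dominated_loc_of_deriv_le (s := Set.Ioi (a / 2))
    (F := fun b x => Real.exp (-(b * x)) • f x)
    (F' := fun b x => -(Real.exp (-(b * x)) • x • f x)) (Ioi_mem_nhds (half_lt_self ha))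
    (Eventually.of_forall hmeas) (integrableOn_exp_neg_mul_smul_of_norm_le ha hf hB)
    hint.neg.aestronglyMeasurable ?_ hdom ?_).2
  · filter_upwards [ae_restrict_mem measurableSet_Ioi] with x hx b hb
    have hx : 0 < x := hx
    rw [norm_neg, norm_exp_neg_mul_smul, norm_smul, Real.norm_of_nonneg hx.le, smul_eq_mul,
      smul_eq_mul]
    gcongr
    · exact le_of_lt hb
    · exact hB x hx
  · refine ae_of_all _ fun x b _ => ?_
    refine (((hasDerivAt_id' b).mul_const x).neg.exp.smul_const (f x)).congr_deriv ?_
    rw [smul_smul, ← neg_smul, Pi.neg_apply, one_mul, mul_neg]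

lemma laplace_of_hasDerivAt_id_smul [CompleteSpace E] {g : ℝ → E} (ha : 0 < a)
    (hf : ContinuousOn f (Set.Ioi 0)) (hB : ∀ x > 0, ‖f x‖ ≤ B)
    (hg : ∀ x > 0, HasDerivAt (fun x => x • f x) (g x) x)
    (hgint : IntegrableOn (fun x => Real.exp (-(a * x)) • g x) (Set.Ioi 0)) :
    laplace g a = a • laplace (fun x => x • f x) a := by
  have hint := integrableOn_exp_neg_mul_id_smul_of_norm_le ha hf hB
  have hderiv : ∀ x ∈ Set.Ioi (0 : ℝ), HasDerivAt (fun x => Real.exp (-(a * x)) • x • f x)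
      (Real.exp (-(a * x)) • g x - a • Real.exp (-(a * x)) • x • f x) x := by
    intro x hx
    refine (((hasDerivAt_id' x).const_mul a).neg.exp.smul (hg x hx)).congr_deriv ?_
    module
  have hle : ∀ x ≥ 0, ‖Real.exp (-(a * x)) • x • f x‖ ≤ Real.exp (-(a * x)) * x * B := by
    intro x hx
    rcases hx.eq_or_lt with rfl | hx
    · simp
    rw [norm_exp_neg_mul_smul, norm_smul, Real.norm_of_nonneg hx.le, mul_assoc]
    gcongr
    exact hB x hx
  have hinfty : Tendsto (fun x => Real.exp (-(a * x)) • x • f x) atTop (𝓝 0) := by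
    refine squeeze_zero_norm' ((eventually_ge_atTop 0).mono hle) ?_
    have hlim := (tendsto_rpow_mul_exp_neg_mul_atTop_nhds_zero 1 a ha).mul_const B
    simp only [Real.rpow_one, zero_mul] at hlim
    refine hlim.congr fun x => ?_
    ring_nf
  have hzero : ContinuousWithinAt (fun x => Real.exp (-(a * x)) • x • f x) (Set.Ici 0) 0 := by
    have hlim : Tendsto (fun x => Real.exp (-(a * x)) * x * B) (𝓝[≥] 0) (𝓝 0) := by
      refine tendsto_nhdsWithin_of_tendsto_nhds (Continuous.tendsto' (by fun_prop) _ _ (by simp))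
    rw [ContinuousWithinAt]
    simp only [zero_smul, smul_zero]
    exact squeeze_zero_norm' (eventually_mem_nhdsWithin.mono hle) hlim
  have hsmul : IntegrableOn (fun x => a • Real.exp (-(a * x)) • x • f x) (Set.Ioi 0) := hint.smul a
  have hftc := integral_Ioi_of_hasDerivAt_of_tendsto hzero hderiv (hgint.sub hsmul) hinfty
  rwa [integral_sub hgint hsmul, integral_smul, zero_smul, smul_zero, sub_zero,
    sub_eq_zero] at hftc

end LaplaceDerivative

lemma tendsto_sinh_atTop : Tendsto Real.sinh atTop atTop :=
  tendsto_atTop_mono' _ ((eventually_ge_atTop 0).mono fun _ => Real.self_le_sinh_iff.mpr) tendsto_id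

lemma tendsto_log_two_mul_sinh_sub :
    Tendsto (fun T => Real.log (2 * Real.sinh T) - T) atTop (𝓝 0) := by
  have hexp : Tendsto (fun T : ℝ => 1 - Real.exp (-(2 * T))) atTop (𝓝 1) := by
    simpa using (Real.tendsto_exp_neg_atTop_nhds_zero.comp
      (tendsto_id.const_mul_atTop two_pos)).const_sub 1
  have hlog := (Real.continuousAt_log one_ne_zero).tendsto.comp hexp
  rw [Real.log_one] at hlog
  refine hlog.congr' ?_
  filter_upwards [eventually_gt_atTop 0] with T hT
  have hpos : 0 < 1 - Real.exp (-(2 * T)) := by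
    rw [sub_pos, Real.exp_lt_one_iff]
    linarith
  have hsinh : 2 * Real.sinh T = Real.exp T * (1 - Real.exp (-(2 * T))) := by
    rw [Real.sinh_eq, mul_sub, ← Real.exp_add]
    ring_nf
  rw [hsinh, Real.log_mul (Real.exp_ne_zero T) hpos.ne', Real.log_exp, Function.comp_apply]
  ring

section LaplaceBessel

variable {μ : ℂ} {a B : ℝ}

lemma laplace_id_smul_besselJ (ha : 0 < a) (hB : ∀ x > 0, ‖besselJ μ x‖ ≤ B)
    (hB' : ∀ x > 0, ‖besselJ (μ + 1) x‖ ≤ B) :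
    a * laplace (fun x => x • besselJ μ x) a =
      (μ + 1) * laplace (besselJ μ) a - laplace (fun x => x • besselJ (μ + 1) x) a := by
  have hint := (integrableOn_exp_neg_mul_smul_of_norm_le ha (continuousOn_besselJ μ) hB).const_mul
    (μ + 1)
  have hint' := integrableOn_exp_neg_mul_id_smul_of_norm_le ha (continuousOn_besselJ (μ + 1)) hB'
  have hsplit : ∀ x : ℝ, Real.exp (-(a * x)) • ((μ + 1) * besselJ μ x - x * besselJ (μ + 1) x) =
      (μ + 1) * Real.exp (-(a * x)) • besselJ μ x -
        Real.exp (-(a * x)) • x • besselJ (μ + 1) x := by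
    intro x
    simp only [Complex.real_smul]
    ring
  have hibp := laplace_of_hasDerivAt_id_smul (a := a) (f := besselJ μ)
    (g := fun x => (μ + 1) * besselJ μ x - x * besselJ (μ + 1) x) ha
    (continuousOn_besselJ μ) hB (fun x hx => ?_) ?_
  · rw [← Complex.real_smul, ← hibp, laplace, laplace, laplace, ← integral_const_mul,
      ← integral_sub hint hint']
    simp only [hsplit]
  · have hx' : (x : ℂ) ≠ 0 := by exact_mod_cast (ne_of_gt hx)
    refine ((hasDerivAt_id' x).smul (hasDerivAt_besselJ μ hx)).congr_deriv ?_
    rw [Complex.real_smul, one_smul]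
    field_simp
    ring
  · simp only [hsplit]
    exact hint.sub hint'

lemma laplace_id_smul_besselJ_add_one (ha : 0 < a) (hB : ∀ x > 0, ‖besselJ μ x‖ ≤ B)
    (hB' : ∀ x > 0, ‖besselJ (μ + 1) x‖ ≤ B) :
    a * laplace (fun x => x • besselJ (μ + 1) x) a =
      laplace (fun x => x • besselJ μ x) a - μ * laplace (besselJ (μ + 1)) a := by
  have hint := integrableOn_exp_neg_mul_id_smul_of_norm_le ha (continuousOn_besselJ μ) hB
  have hint' := (integrableOn_exp_neg_mul_smul_of_norm_le ha (continuousOn_besselJ (μ + 1))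
    hB').const_mul μ
  have hsplit : ∀ x : ℝ, Real.exp (-(a * x)) • (x * besselJ μ x - μ * besselJ (μ + 1) x) =
      Real.exp (-(a * x)) • x • besselJ μ x -
        μ * Real.exp (-(a * x)) • besselJ (μ + 1) x := by
    intro x
    simp only [Complex.real_smul]
    ring
  have hibp := laplace_of_hasDerivAt_id_smul (a := a) (f := besselJ (μ + 1))
    (g := fun x => x * besselJ μ x - μ * besselJ (μ + 1) x) ha
    (continuousOn_besselJ (μ + 1)) hB' (fun x hx => ?_) ?_
  · rw [← Complex.real_smul, ← hibp, laplace, laplace, laplace, ← integral_const_mul,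
      ← integral_sub hint hint']
    simp only [hsplit]
  · have hx' : (x : ℂ) ≠ 0 := by exact_mod_cast (ne_of_gt hx)
    refine ((hasDerivAt_id' x).smul (hasDerivAt_besselJ_add_one μ hx)).congr_deriv ?_
    rw [Complex.real_smul, one_smul]
    field_simp
    ring
  · simp only [hsplit]
    exact hint.sub hint'

lemma hasDerivAt_laplace_sinh {E : Type*} [NormedAddCommGroup E] [NormedSpace ℝ E] {f : ℝ → E}
    {T : ℝ} (hT : 0 < T) (hf : ContinuousOn f (Set.Ioi 0)) (hB : ∀ x > 0, ‖f x‖ ≤ B) :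
    HasDerivAt (fun T => laplace f (Real.sinh T))
      (Real.cosh T • -laplace (fun x => x • f x) (Real.sinh T)) T :=
  (hasDerivAt_laplace (Real.sinh_pos_iff.mpr hT) hf hB).scomp T (Real.hasDerivAt_sinh T)

lemma hasDerivAt_laplace_besselJ_add_one_sub (hB : ∀ x > 0, ‖besselJ μ x‖ ≤ B)
    (hB' : ∀ x > 0, ‖besselJ (μ + 1) x‖ ≤ B) {T : ℝ} (hT : 0 < T) :
    HasDerivAt (fun T : ℝ => laplace (besselJ (μ + 1)) (Real.sinh T) -
        Real.exp (-T) * laplace (besselJ μ) (Real.sinh T))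
      (μ * (laplace (besselJ (μ + 1)) (Real.sinh T) -
        Real.exp (-T) * laplace (besselJ μ) (Real.sinh T))) T := by
  have hsinh := Real.sinh_pos_iff.mpr hT
  have h₀ := laplace_id_smul_besselJ hsinh hB hB'
  have h₁ := laplace_id_smul_besselJ_add_one hsinh hB hB'
  refine ((hasDerivAt_laplace_sinh hT (continuousOn_besselJ _) hB').sub
    ((hasDerivAt_neg T).exp.ofReal_comp.mul
      (hasDerivAt_laplace_sinh hT (continuousOn_besselJ _) hB))).congr_deriv ?_
  have hcosh : (Real.cosh T : ℂ) = Real.exp (-T) + Real.sinh T := by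
    exact_mod_cast by rw [← Real.cosh_sub_sinh]; ring
  have hexp : (Real.exp (-T) : ℂ) * (Real.cosh T + Real.sinh T) = 1 := by
    exact_mod_cast by rw [Real.cosh_add_sinh, ← Real.exp_add]; simp
  simp only [Complex.real_smul]
  set M₀ := laplace (fun x => x • besselJ μ x) (Real.sinh T)
  set M₁ := laplace (fun x => x • besselJ (μ + 1) x) (Real.sinh T)
  push_cast at *
  linear_combination -M₁ * hcosh + M₀ * hexp - h₁ - Complex.exp (-T) * h₀

lemma exists_eq_mul_exp_of_hasDerivAt {y : ℝ → ℂ} {c : ℂ}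
    (hy : ∀ T > 0, HasDerivAt y (c * y T) T) :
    ∃ C : ℂ, ∀ T > 0, y T = C * Complex.exp (c * T) := by
  have hderiv : ∀ T > 0, HasDerivAt (fun T : ℝ => y T * Complex.exp (-(c * T))) 0 T := by
    intro T hT
    refine ((hy T hT).mul ((hasDerivAt_id' T).ofReal_comp.const_mul c).neg.cexp).congr_deriv ?_
    simp only [Pi.neg_apply, Complex.ofReal_one, mul_one, mul_neg]
    ring
  obtain ⟨C, hC⟩ := isOpen_Ioi.exists_is_const_of_deriv_eq_zero isPreconnected_Ioi
    (fun T hT => (hderiv T hT).differentiableAt.differentiableWithinAt)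
    (fun T hT => (hderiv T hT).deriv)
  refine ⟨C, fun T hT => ?_⟩
  rw [← hC T hT, mul_assoc, ← Complex.exp_add, neg_add_cancel, Complex.exp_zero, mul_one]

lemma laplace_besselJ_add_one (hμ : 0 ≤ μ.re) (hB : ∀ x > 0, ‖besselJ μ x‖ ≤ B)
    (hB' : ∀ x > 0, ‖besselJ (μ + 1) x‖ ≤ B) {T : ℝ} (hT : 0 < T) :
    laplace (besselJ (μ + 1)) (Real.sinh T) =
      Real.exp (-T) * laplace (besselJ μ) (Real.sinh T) := by
  obtain ⟨C, hC⟩ := exists_eq_mul_exp_of_hasDerivAt fun T hT =>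
    hasDerivAt_laplace_besselJ_add_one_sub hB hB' hT
  have hle : ∀ᶠ T in atTop, ‖C‖ ≤ 2 * B / Real.sinh T := by
    filter_upwards [eventually_gt_atTop 0] with T hT
    have hsinh := Real.sinh_pos_iff.mpr hT
    have hle₁ := norm_laplace_le hsinh hB'
    have hle₀ : ‖(Real.exp (-T) : ℂ) * laplace (besselJ μ) (Real.sinh T)‖ ≤ B / Real.sinh T := by
      rw [norm_mul, Complex.norm_real, Real.norm_of_nonneg (Real.exp_pos _).le]
      exact (mul_le_of_le_one_left (norm_nonneg _) (Real.exp_le_one_iff.mpr (by linarith))).trans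
        (norm_laplace_le hsinh hB)
    have hexp : 1 ≤ ‖Complex.exp (μ * T)‖ := by
      rw [Complex.norm_exp, Complex.re_mul_ofReal]
      exact Real.one_le_exp (mul_nonneg hμ hT.le)
    calc ‖C‖ ≤ ‖C‖ * ‖Complex.exp (μ * T)‖ := le_mul_of_one_le_right (norm_nonneg C) hexp
      _ ≤ B / Real.sinh T + B / Real.sinh T := by
        rw [← norm_mul, ← hC T hT]
        exact (norm_sub_le _ _).trans (add_le_add hle₁ hle₀)
      _ = 2 * B / Real.sinh T := by ring
  have hlim : Tendsto (fun T => 2 * B / Real.sinh T) atTop (𝓝 0) :=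
    tendsto_const_nhds.div_atTop tendsto_sinh_atTop
  have hzero : C = 0 := norm_le_zero_iff.mp (ge_of_tendsto hlim hle)
  rw [← sub_eq_zero, hC T hT, hzero, zero_mul]

lemma exists_cosh_mul_laplace_besselJ_eq (hμ : 0 ≤ μ.re) (hB : ∀ x > 0, ‖besselJ μ x‖ ≤ B)
    (hB' : ∀ x > 0, ‖besselJ (μ + 1) x‖ ≤ B) :
    ∃ C : ℂ, ∀ T > 0,
      Real.cosh T * laplace (besselJ μ) (Real.sinh T) = C * Complex.exp (-μ * T) := by
  refine exists_eq_mul_exp_of_hasDerivAt fun T hT => ?_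
  have hsinh := Real.sinh_pos_iff.mpr hT
  have h₀ := laplace_id_smul_besselJ hsinh hB hB'
  have h₁ := laplace_id_smul_besselJ_add_one hsinh hB hB'
  have h := laplace_besselJ_add_one hμ hB hB' hT
  refine ((Real.hasDerivAt_cosh T).ofReal_comp.mul
    (hasDerivAt_laplace_sinh hT (continuousOn_besselJ _) hB)).congr_deriv ?_
  have hsq : (Real.cosh T : ℂ) ^ 2 = Real.sinh T ^ 2 + 1 := by exact_mod_cast Real.cosh_sq T
  have hexp : (Real.exp (-T) : ℂ) = Real.cosh T - Real.sinh T := by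
    exact_mod_cast (Real.cosh_sub_sinh T).symm
  rw [h, hexp] at h₁
  simp only [Complex.real_smul]
  set M₀ := laplace (fun x => x • besselJ μ x) (Real.sinh T)
  set M₁ := laplace (fun x => x • besselJ (μ + 1) x) (Real.sinh T)
  linear_combination -M₀ * hsq - Real.sinh T * h₀ + h₁

end LaplaceBessel

section LaplaceBesselImaginaryOrder

variable (τ : ℝ)

lemma mul_laplace_eq_integral {E : Type*} [NormedAddCommGroup E] [NormedSpace ℝ E] (f : ℝ → E)
    {a : ℝ} (ha : 0 < a) :
    a • laplace f a = ∫ t in Set.Ioi 0, Real.exp (-t) • f (t / a) := by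
  have hsubst := integral_comp_mul_left_Ioi (fun t => Real.exp (-t) • f (t / a)) 0 ha
  simp only [mul_div_cancel_left₀ _ ha.ne', mul_zero] at hsubst
  rw [laplace, hsubst, smul_inv_smul₀ ha.ne']

lemma exp_mul_besselJ_div (μ : ℂ) {a t : ℝ} (ha : 0 < a) (ht : 0 < t) :
    Complex.exp (μ * Real.log (2 * a)) * besselJ μ (t / a) =
      (t : ℂ) ^ μ * besselClifford μ (-((t / a : ℝ) / 2) ^ 2) := by
  have hlog : Real.log (2 * a) + Real.log (t / a / 2) = Real.log t := by
    rw [← Real.log_mul (by positivity) (by positivity)]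
    field_simp
  rw [besselJ_eq_exp_mul_besselClifford μ (div_pos ht ha), ← mul_assoc, ← Complex.exp_add,
    ← mul_add, ← Complex.ofReal_add, hlog, Complex.cpow_def_of_ne_zero (by exact_mod_cast ht.ne'),
    Complex.ofReal_log ht.le, mul_comm μ]

lemma integral_exp_neg_smul_cpow_mul_besselClifford_zero {μ : ℂ} (hμ : -1 < μ.re) :
    ∫ t in Set.Ioi (0 : ℝ), Real.exp (-t) • ((t : ℂ) ^ μ * besselClifford μ 0) = 1 := by
  have hre : 0 < (μ + 1).re := by
    rw [Complex.add_re, Complex.one_re]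
    linarith
  have hGamma := Complex.Gamma_eq_integral hre
  rw [Complex.GammaIntegral] at hGamma
  simp only [add_sub_cancel_right] at hGamma
  simp only [besselClifford_zero, Complex.real_smul, ← mul_assoc]
  rw [integral_mul_const, ← hGamma, mul_inv_cancel₀ (Complex.Gamma_ne_zero_of_re_pos hre)]

lemma tendsto_mul_laplace_besselJ_I_mul :
    Tendsto (fun a : ℝ => Complex.exp (Complex.I * τ * Real.log (2 * a)) *
      a • laplace (besselJ (Complex.I * τ)) a) atTop (𝓝 1) := by
  obtain ⟨B, hB⟩ := exists_norm_besselJ_I_mul_le τ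
  have hre : (Complex.I * τ).re = 0 := by simp
  set ν := Complex.I * τ
  have hlim := tendsto_integral_filter_of_dominated_convergence (l := atTop)
    (μ := volume.restrict (Set.Ioi (0 : ℝ)))
    (F := fun a t => Real.exp (-t) • (Complex.exp (ν * Real.log (2 * a)) * besselJ ν (t / a)))
    (f := fun t => Real.exp (-t) • ((t : ℂ) ^ ν * besselClifford ν 0))
    (fun t => Real.exp (-t) * B) ?_ ?_ ?_ ?_
  · rw [integral_exp_neg_smul_cpow_mul_besselClifford_zero (by rw [hre]; norm_num)] at hlim
    refine hlim.congr' ?_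
    filter_upwards [eventually_gt_atTop 0] with a ha
    simp only [mul_laplace_eq_integral _ ha, ← integral_const_mul, mul_smul_comm]
  · filter_upwards [eventually_gt_atTop 0] with a ha
    have hcont : ContinuousOn (fun t => besselJ ν (t / a)) (Set.Ioi 0) :=
      (continuousOn_besselJ ν).comp (by fun_prop) fun t ht => div_pos ht ha
    exact ContinuousOn.aestronglyMeasurable (by fun_prop) measurableSet_Ioi
  · filter_upwards [eventually_gt_atTop 0] with a ha
    filter_upwards [ae_restrict_mem measurableSet_Ioi] with t ht
    rw [norm_smul, norm_mul, Complex.norm_exp, Complex.re_mul_ofReal, hre, zero_mul, Real.exp_zero,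
      one_mul, Real.norm_of_nonneg (Real.exp_pos _).le]
    gcongr
    exact hB _ (div_pos ht ha)
  · simpa using (integrableOn_exp_neg_mul_Ioi one_pos).mul_const B
  · filter_upwards [ae_restrict_mem measurableSet_Ioi] with t ht
    refine (Tendsto.congr' ?_ ((tendsto_const_nhds.mul
      (((continuous_besselClifford ν).tendsto 0).comp (?_ : Tendsto
        (fun a : ℝ => (-((t / a : ℝ) / 2) ^ 2 : ℂ)) atTop (𝓝 0)))).const_smul _))
    · filter_upwards [eventually_gt_atTop 0] with a ha
      rw [exp_mul_besselJ_div ν ha ht, Function.comp_apply]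
    · have hdiv := (tendsto_const_nhds (x := t)).div_atTop tendsto_id
      exact ((Continuous.tendsto' (by fun_prop) _ _ (by simp) :
        Tendsto (fun x : ℝ => (-((x : ℂ) / 2) ^ 2)) (𝓝 0) (𝓝 0))).comp hdiv

lemma tendsto_sinh_div_cosh_atTop :
    Tendsto (fun T => Real.sinh T / Real.cosh T) atTop (𝓝 1) := by
  have hexp : Tendsto (fun T : ℝ => Real.exp (-T) / Real.cosh T) atTop (𝓝 0) :=
    squeeze_zero (fun T => by positivity)
      (fun T => div_le_self (Real.exp_pos _).le (Real.one_le_cosh T))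
      Real.tendsto_exp_neg_atTop_nhds_zero
  have hlim := hexp.const_sub 1
  rw [sub_zero] at hlim
  refine hlim.congr fun T => ?_
  rw [← Real.cosh_sub_sinh, sub_div, div_self (Real.cosh_pos T).ne', sub_sub_cancel]

theorem laplace_besselJ_I_mul {T : ℝ} (hT : 0 < T) :
    laplace (besselJ (Complex.I * τ)) (Real.sinh T) =
      Complex.exp (-(Complex.I * τ) * T) / Real.cosh T := by
  obtain ⟨B, hB⟩ := exists_norm_besselJ_I_mul_le τ
  obtain ⟨B', hB'⟩ := exists_norm_besselJ_I_mul_add_one_le τ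
  obtain ⟨C, hC⟩ := exists_cosh_mul_laplace_besselJ_eq (μ := Complex.I * τ) (by simp)
    (fun x hx => (hB x hx).trans (le_max_left B B'))
    (fun x hx => (hB' x hx).trans (le_max_right B B'))
  have hsolve : ∀ T > 0, laplace (besselJ (Complex.I * τ)) (Real.sinh T) =
      C * Complex.exp (-(Complex.I * τ) * T) / Real.cosh T := fun T hT => by
    rw [← hC T hT, mul_div_cancel_left₀ _ (by exact_mod_cast (Real.cosh_pos T).ne')]
  have hphase : Tendsto (fun T => Complex.exp (Complex.I * τ *
      (Real.log (2 * Real.sinh T) - T : ℝ))) atTop (𝓝 1) :=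
    (Continuous.tendsto' (f := fun s : ℝ => Complex.exp (Complex.I * τ * s)) (by fun_prop) 0 1
      (by simp)).comp tendsto_log_two_mul_sinh_sub
  have hlim := (hphase.mul tendsto_sinh_div_cosh_atTop.ofReal).mul_const C
  have hone : C = 1 := by
    rw [Complex.ofReal_one, mul_one, one_mul] at hlim
    refine tendsto_nhds_unique (hlim.congr' ?_)
      ((tendsto_mul_laplace_besselJ_I_mul τ).comp tendsto_sinh_atTop)
    filter_upwards [eventually_gt_atTop 0] with T hT
    rw [Function.comp_apply, hsolve T hT, Complex.ofReal_sub, mul_sub, sub_eq_add_neg,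
      Complex.exp_add, Complex.real_smul, Complex.ofReal_div, neg_mul]
    ring
  rw [hsolve T hT, hone, one_mul]

end LaplaceBesselImaginaryOrder

section SinhSubstitution

variable {E : Type*} [NormedAddCommGroup E] [NormedSpace ℝ E] {b : ℝ}

lemma image_const_mul_sinh_Ioi (hb : 0 < b) :
    (fun r => b * Real.sinh r) '' Set.Ioi 0 = Set.Ioi 0 := by
  ext x
  refine ⟨?_, fun hx => ⟨Real.arsinh (x / b), ?_, ?_⟩⟩
  · rintro ⟨r, hr, rfl⟩
    exact mul_pos hb (Real.sinh_pos_iff.mpr hr)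
  · exact Real.arsinh_pos_iff.mpr (div_pos hx hb)
  · simp only [Real.sinh_arsinh, mul_div_cancel₀ x hb.ne']

lemma integral_Ioi_eq_integral_const_mul_sinh (hb : 0 < b) (g : ℝ → E) :
    ∫ x in Set.Ioi 0, g x = ∫ r in Set.Ioi 0, (b * Real.cosh r) • g (b * Real.sinh r) := by
  have hinj : Set.InjOn (fun r => b * Real.sinh r) (Set.Ioi 0) :=
    ((mul_right_injective₀ hb.ne').comp Real.sinh_injective).injOn
  conv_lhs => rw [← image_const_mul_sinh_Ioi hb]
  rw [integral_image_eq_integral_abs_deriv_smul measurableSet_Ioi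
    (fun r _ => ((Real.hasDerivAt_sinh r).const_mul b).hasDerivWithinAt) hinj]
  simp only [abs_of_pos (mul_pos hb (Real.cosh_pos _))]

end SinhSubstitution

lemma laplace_comp_const_mul {E : Type*} [NormedAddCommGroup E] [NormedSpace ℝ E] (f : ℝ → E)
    {b : ℝ} (hb : 0 < b) (a : ℝ) :
    laplace (fun x => f (b * x)) a = b⁻¹ • laplace f (a / b) := by
  have hsubst := integral_comp_mul_left_Ioi (fun t => Real.exp (-(a / b * t)) • f t) 0 hb
  rw [mul_zero] at hsubst
  rw [laplace, laplace, ← hsubst]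
  congr! 5
  field_simp

lemma setIntegral_swap_of_norm_le {E : Type*} [NormedAddCommGroup E] [NormedSpace ℝ E]
    {s t : Set ℝ} (hs : MeasurableSet s) (ht : MeasurableSet t) (htop : volume t ≠ ⊤)
    {f : ℝ → ℝ → E} (hf : ContinuousOn f.uncurry (s ×ˢ t)) {g : ℝ → ℝ} (hg : IntegrableOn g s)
    (hle : ∀ x ∈ s, ∀ y ∈ t, ‖f x y‖ ≤ g x) :
    ∫ x in s, ∫ y in t, f x y = ∫ y in t, ∫ x in s, f x y := by
  have : IsFiniteMeasure (volume.restrict t) := isFiniteMeasure_restrict.mpr htop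
  refine integral_integral_swap ((hg.comp_fst _).mono' ?_ ?_) <;> rw [Measure.prod_restrict]
  · exact hf.aestronglyMeasurable (hs.prod ht)
  · filter_upwards [ae_restrict_mem (hs.prod ht)] with p hp
    exact hle p.1 hp.1 p.2 hp.2

section LaplaceBesselSq

variable (τ : ℝ)

lemma laplace_besselJ_I_mul_comp_const_mul {a b : ℝ} (ha : 0 < a) (hb : 0 < b) :
    laplace (fun x => besselJ (Complex.I * τ) (b * x)) a =
      Complex.exp (-(Complex.I * τ) * Real.arsinh (a / b)) / (b * √(1 + (a / b) ^ 2) : ℝ) := by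
  have hT : 0 < Real.arsinh (a / b) := Real.arsinh_pos_iff.mpr (div_pos ha hb)
  have h := laplace_besselJ_I_mul τ hT
  rw [Real.sinh_arsinh, Real.cosh_arsinh] at h
  rw [laplace_comp_const_mul _ hb, h, Complex.real_smul, Complex.ofReal_mul, Complex.ofReal_inv]
  field_simp

lemma laplace_besselJ_I_mul_sq {a : ℝ} (ha : 0 < a) :
    laplace (fun x => besselJ (Complex.I * τ) x ^ 2) a =
      ∫ θ in Set.Ioo (-(Real.pi / 2)) (Real.pi / 2), (Real.pi : ℂ)⁻¹ *
        laplace (fun x => besselJ (Complex.I * (2 * τ : ℝ)) (2 * Real.cos θ * x)) a := by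
  obtain ⟨B, hB⟩ := exists_norm_besselJ_I_mul_le (2 * τ)
  have horder : Complex.I * (2 * τ : ℝ) = 2 * (Complex.I * τ) := by push_cast; ring
  have hmaps : ∀ p ∈ Set.Ioi (0 : ℝ) ×ˢ Set.Ioo (-(Real.pi / 2)) (Real.pi / 2),
      0 < 2 * Real.cos p.2 * p.1 := fun p hp =>
    mul_pos (mul_pos two_pos (Real.cos_pos_of_mem_Ioo hp.2)) hp.1
  have hneumann : ∀ x ∈ Set.Ioi (0 : ℝ), ∫ θ in Set.Ioo (-(Real.pi / 2)) (Real.pi / 2),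
      Real.exp (-(a * x)) • besselJ (Complex.I * (2 * τ : ℝ)) (2 * Real.cos θ * x) =
        Real.pi * Real.exp (-(a * x)) • besselJ (Complex.I * τ) x ^ 2 := fun x hx => by
    rw [integral_smul, horder, integral_besselJ_two_mul_cos (by simp) hx, mul_smul_comm]
  have hcont : ContinuousOn (fun p : ℝ × ℝ => besselJ (Complex.I * (2 * τ : ℝ))
      (2 * Real.cos p.2 * p.1)) (Set.Ioi 0 ×ˢ Set.Ioo (-(Real.pi / 2)) (Real.pi / 2)) :=
    (continuousOn_besselJ _).comp (by fun_prop) hmaps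
  have hle : ∀ x ∈ Set.Ioi (0 : ℝ), ∀ θ ∈ Set.Ioo (-(Real.pi / 2)) (Real.pi / 2),
      ‖Real.exp (-(a * x)) • besselJ (Complex.I * (2 * τ : ℝ)) (2 * Real.cos θ * x)‖ ≤
        Real.exp (-(a * x)) * B := fun x hx θ hθ => by
    rw [norm_exp_neg_mul_smul]
    gcongr
    exact hB _ (hmaps (x, θ) ⟨hx, hθ⟩)
  have hswap := setIntegral_swap_of_norm_le (f := fun x θ => Real.exp (-(a * x)) •
      besselJ (Complex.I * (2 * τ : ℝ)) (2 * Real.cos θ * x))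
    measurableSet_Ioi measurableSet_Ioo (by simp)
    (ContinuousOn.smul (f := fun p : ℝ × ℝ => Real.exp (-(a * p.1))) (by fun_prop) hcont)
    ((integrableOn_exp_neg_mul_Ioi ha).mul_const B) hle
  rw [setIntegral_congr_fun measurableSet_Ioi hneumann, integral_const_mul] at hswap
  simp only [integral_const_mul, laplace]
  rw [← hswap, inv_mul_cancel_left₀ (by exact_mod_cast Real.pi_ne_zero)]

lemma integrableOn_laplace_besselJ_I_mul_cos_mul {a : ℝ} (ha : 0 < a) :
    IntegrableOn (fun θ => laplace (fun x => besselJ (Complex.I * τ) (2 * Real.cos θ * x)) a)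
      (Set.Ioo (-(Real.pi / 2)) (Real.pi / 2)) := by
  obtain ⟨B, hB⟩ := exists_norm_besselJ_I_mul_le τ
  have hpos : ∀ θ ∈ Set.Ioo (-(Real.pi / 2)) (Real.pi / 2), 0 < 2 * Real.cos θ := fun θ hθ =>
    mul_pos two_pos (Real.cos_pos_of_mem_Ioo hθ)
  refine IntegrableOn.of_bound (by simp) ?_ (B / a) ?_
  · have harsinh := Real.continuous_arsinh.measurable
    refine AEStronglyMeasurable.congr (Measurable.aestronglyMeasurable (by fun_prop))
      (f := fun θ => Complex.exp (-(Complex.I * τ) * Real.arsinh (a / (2 * Real.cos θ))) /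
        (2 * Real.cos θ * √(1 + (a / (2 * Real.cos θ)) ^ 2) : ℝ)) ?_
    filter_upwards [ae_restrict_mem measurableSet_Ioo] with θ hθ
    exact (laplace_besselJ_I_mul_comp_const_mul τ ha (hpos θ hθ)).symm
  · refine (ae_restrict_mem measurableSet_Ioo).mono fun θ hθ => ?_
    exact norm_laplace_le ha fun x hx => hB _ (mul_pos (hpos θ hθ) hx)

lemma laplace_im_besselJ_I_mul_sq {a : ℝ} (ha : 0 < a) :
    laplace (fun x => (besselJ (Complex.I * τ) x ^ 2).im) a =
      -(2 * Real.pi)⁻¹ * ∫ θ in Set.Ioo (-(Real.pi / 2)) (Real.pi / 2),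
        Real.sin (2 * τ * Real.arsinh (a / (2 * Real.cos θ))) /
          (Real.cos θ * √(1 + (a / (2 * Real.cos θ)) ^ 2)) := by
  obtain ⟨B, hB⟩ := exists_norm_besselJ_I_mul_sq_le τ
  have him := laplace_clm_comp Complex.imCLM
    (integrableOn_exp_neg_mul_smul_of_norm_le ha (continuousOn_besselJ_sq (Complex.I * τ)) hB)
  simp only [Complex.imCLM_apply] at him
  rw [him, laplace_besselJ_I_mul_sq τ ha, ← Complex.imCLM_apply,
    ← Complex.imCLM.integral_comp_comm
      ((integrableOn_laplace_besselJ_I_mul_cos_mul (2 * τ) ha).const_mul _), ← integral_const_mul]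
  refine setIntegral_congr_fun measurableSet_Ioo fun θ hθ => ?_
  have hphase : -(Complex.I * (2 * τ : ℝ)) * Real.arsinh (a / (2 * Real.cos θ)) =
      (-(2 * τ * Real.arsinh (a / (2 * Real.cos θ))) : ℝ) * Complex.I := by
    push_cast
    ring
  rw [laplace_besselJ_I_mul_comp_const_mul (2 * τ) ha
    (mul_pos two_pos (Real.cos_pos_of_mem_Ioo hθ)), hphase, Complex.imCLM_apply,
    ← Complex.ofReal_inv, Complex.im_ofReal_mul, Complex.div_ofReal_im,
    Complex.exp_ofReal_mul_I_im, Real.sin_neg]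
  field_simp

end LaplaceBesselSq

/-! ### Struve weights -/

section StruveWeight

/-- The weight `x ↦ x (1 + x²)^(-3/2)`, whose Laplace transform differs from `1` by
`y ∫₀^∞ e^(-y sinh t) dt`. -/
noncomputable def struveWeight (x : ℝ) : ℝ := x / √(1 + x ^ 2) ^ 3

lemma continuous_struveWeight : Continuous struveWeight :=
  continuous_id.div (by fun_prop) fun x => by positivity

lemma struveWeight_nonneg {x : ℝ} (hx : 0 ≤ x) : 0 ≤ struveWeight x := by
  rw [struveWeight]
  positivity

lemma hasDerivAt_neg_inv_sqrt_one_add_sq (x : ℝ) :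
    HasDerivAt (fun x => -(√(1 + x ^ 2))⁻¹) (struveWeight x) x := by
  have hpos : 0 < 1 + x ^ 2 := by positivity
  refine ((((hasDerivAt_pow 2 x).const_add 1).sqrt hpos.ne').inv (by positivity)).neg.congr_deriv ?_
  rw [struveWeight]
  field_simp
  simp

lemma tendsto_inv_sqrt_one_add_sq :
    Tendsto (fun x : ℝ => (√(1 + x ^ 2))⁻¹) atTop (𝓝 0) :=
  tendsto_inv_atTop_zero.comp (Real.tendsto_sqrt_atTop.comp
    (tendsto_atTop_add_const_left _ 1 (tendsto_pow_atTop two_ne_zero)))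

lemma integrableOn_struveWeight : IntegrableOn struveWeight (Set.Ioi 0) :=
  integrableOn_Ioi_deriv_of_nonneg' (fun x _ => hasDerivAt_neg_inv_sqrt_one_add_sq x)
    (fun _ hx => struveWeight_nonneg (le_of_lt hx)) tendsto_inv_sqrt_one_add_sq.neg

lemma integrableOn_struveWeight_div : IntegrableOn (fun x => struveWeight x / x) (Set.Ioi 0) := by
  refine integrable_inv_one_add_sq.integrableOn.mono'
    (continuous_struveWeight.measurable.div measurable_id).aestronglyMeasurable ?_
  filter_upwards [ae_restrict_mem measurableSet_Ioi] with x hx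
  have hx : 0 < x := hx
  have hone : 1 ≤ √(1 + x ^ 2) := Real.one_le_sqrt.mpr (by nlinarith)
  have hsq : √(1 + x ^ 2) ^ 2 = 1 + x ^ 2 := Real.sq_sqrt (by positivity)
  rw [struveWeight, div_div_cancel_left' hx.ne', Real.norm_of_nonneg (by positivity)]
  refine inv_anti₀ (by positivity) ?_
  calc 1 + x ^ 2 = √(1 + x ^ 2) ^ 2 := hsq.symm
    _ ≤ √(1 + x ^ 2) ^ 3 := pow_le_pow_right₀ hone (by norm_num)

lemma isAbelWeight_struveWeight : IsAbelWeight struveWeight where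
  nonneg _ hx := struveWeight_nonneg hx.le
  integrableOn := integrableOn_struveWeight
  integral_eq_one := by
    rw [integral_Ioi_of_hasDerivAt_of_tendsto' (fun x _ => hasDerivAt_neg_inv_sqrt_one_add_sq x)
      integrableOn_struveWeight tendsto_inv_sqrt_one_add_sq.neg]
    simp
  integrableOn_div := integrableOn_struveWeight_div

lemma laplace_inv_sqrt_one_add_sq (y : ℝ) :
    laplace (fun x : ℝ => (√(1 + x ^ 2))⁻¹) y =
      ∫ t in Set.Ioi (0 : ℝ), Real.exp (-y * Real.sinh t) := by
  rw [laplace, integral_Ioi_eq_integral_const_mul_sinh one_pos]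
  refine setIntegral_congr_fun measurableSet_Ioi fun t _ => ?_
  have hsqrt : √(1 + Real.sinh t ^ 2) = Real.cosh t := by
    rw [add_comm, ← Real.cosh_sq, Real.sqrt_sq (Real.cosh_pos t).le]
  simp only [one_mul, smul_eq_mul, hsqrt]
  field_simp

lemma mul_laplace_inv_sqrt_one_add_sq {y : ℝ} (hy : 0 < y) :
    y * laplace (fun x : ℝ => (√(1 + x ^ 2))⁻¹) y = 1 - laplace struveWeight y := by
  have hle : ∀ x > 0, ‖(√(1 + x ^ 2))⁻¹‖ ≤ 1 := fun x _ => by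
    rw [norm_inv, Real.norm_of_nonneg (Real.sqrt_nonneg _)]
    exact inv_le_one_of_one_le₀ (Real.one_le_sqrt.mpr (by nlinarith))
  have hcont : Continuous fun x : ℝ => (√(1 + x ^ 2))⁻¹ :=
    Continuous.inv₀ (by fun_prop) fun x => by positivity
  have hint := (integrableOn_exp_neg_mul_smul_of_norm_le hy hcont.continuousOn hle).const_mul y
  have hintw : IntegrableOn (fun x => Real.exp (-(y * x)) • struveWeight x) (Set.Ioi 0) := by
    refine integrableOn_struveWeight.norm.mono'
      ((Continuous.smul (f := fun x => Real.exp (-(y * x))) (by fun_prop)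
        continuous_struveWeight).aestronglyMeasurable) ?_
    filter_upwards [ae_restrict_mem measurableSet_Ioi] with x hx
    exact norm_exp_neg_mul_smul_le hy.le (le_of_lt hx) _
  have hderiv : ∀ x ∈ Set.Ici (0 : ℝ), HasDerivAt
      (fun x => Real.exp (-(y * x)) * -(√(1 + x ^ 2))⁻¹)
      (y * Real.exp (-(y * x)) • (√(1 + x ^ 2))⁻¹ + Real.exp (-(y * x)) • struveWeight x) x := by
    intro x _
    refine (((hasDerivAt_id' x).const_mul y).neg.exp.mul
      (hasDerivAt_neg_inv_sqrt_one_add_sq x)).congr_deriv ?_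
    simp only [Pi.neg_apply, smul_eq_mul]
    ring
  have hlim : Tendsto (fun x => Real.exp (-(y * x)) * -(√(1 + x ^ 2))⁻¹) atTop (𝓝 0) := by
    have hexp : Tendsto (fun x => Real.exp (-(y * x))) atTop (𝓝 0) :=
      Real.tendsto_exp_neg_atTop_nhds_zero.comp (tendsto_id.const_mul_atTop hy)
    simpa using hexp.mul tendsto_inv_sqrt_one_add_sq.neg
  have hftc := integral_Ioi_of_hasDerivAt_of_tendsto' hderiv (hint.add hintw) hlim
  rw [integral_add hint hintw, integral_const_mul] at hftc
  rw [eq_sub_iff_add_eq, laplace, laplace, hftc]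
  simp

lemma self_mul_struveK0 {y : ℝ} (hy : 0 < y) :
    y * struveK0 y = 2 / Real.pi * (1 - laplace struveWeight y) := by
  rw [struveK0, ← laplace_inv_sqrt_one_add_sq, ← mul_laplace_inv_sqrt_one_add_sq hy]
  ring

lemma integral_struveWeight_mul_cos (k : ℝ) :
    ∫ θ in Set.Ioo (-(Real.pi / 2)) (Real.pi / 2), struveWeight (Real.cos θ * k) =
      2 * k / (1 + k ^ 2) := by
  have hderiv : ∀ θ : ℝ, HasDerivAt (fun θ => k * Real.sin θ /
      ((1 + k ^ 2) * √(1 + (Real.cos θ * k) ^ 2))) (struveWeight (Real.cos θ * k)) θ := by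
    intro θ
    have hpos : 0 < 1 + (Real.cos θ * k) ^ 2 := by positivity
    have hsq : HasDerivAt (fun θ => 1 + (Real.cos θ * k) ^ 2)
        (-(2 * k ^ 2 * Real.cos θ * Real.sin θ)) θ := by
      refine ((((Real.hasDerivAt_cos θ).mul_const k).pow 2).const_add 1).congr_deriv ?_
      ring
    have hS : √(1 + (Real.cos θ * k) ^ 2) ^ 2 = 1 + (Real.cos θ * k) ^ 2 :=
      Real.sq_sqrt hpos.le
    have hS0 : √(1 + (Real.cos θ * k) ^ 2) ≠ 0 := by positivity
    refine (((Real.hasDerivAt_sin θ).const_mul k).div ((hsq.sqrt hpos.ne').const_mul _)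
      (by positivity)).congr_deriv ?_
    rw [struveWeight]
    set S := √(1 + (Real.cos θ * k) ^ 2)
    field_simp
    rw [hS]
    linear_combination k ^ 3 * Real.cos θ * Real.sin_sq_add_cos_sq θ
  rw [← integral_Ioc_eq_integral_Ioo, ← intervalIntegral.integral_of_le
    (by linarith [Real.pi_pos]), intervalIntegral.integral_eq_sub_of_hasDerivAt
    (fun θ _ => hderiv θ)
    ((continuous_struveWeight.comp (by fun_prop)).intervalIntegrable _ _), Real.sin_neg,
    Real.cos_neg, Real.sin_pi_div_two, Real.cos_pi_div_two, zero_mul, zero_pow two_ne_zero,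
    add_zero, Real.sqrt_one]
  ring

end StruveWeight

section SinKernel

variable (s c : ℝ)

lemma norm_sin_mul_sinh_div_le {r : ℝ} (hr : 0 < r) :
    ‖Real.sin (s * r) * (Real.sinh r / (c ^ 2 + Real.sinh r ^ 2))‖ ≤
      2 * |s| * Real.exp (-(1 / 2 * r)) := by
  have hsinh : 0 < Real.sinh r := Real.sinh_pos_iff.mpr hr
  have hhalf : r * Real.exp (1 / 2 * r) ≤ 2 * Real.sinh r := by
    have htwo := Real.sinh_two_mul (r / 2)
    rw [mul_div_cancel₀ r two_ne_zero] at htwo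
    have hle : r / 2 ≤ Real.sinh (r / 2) := Real.self_le_sinh_iff.mpr (by positivity)
    have hcosh : Real.exp (1 / 2 * r) ≤ 2 * Real.cosh (r / 2) := by
      rw [Real.cosh_eq, one_div_mul_eq_div]
      linarith [Real.exp_pos (-(r / 2))]
    calc r * Real.exp (1 / 2 * r) ≤ (2 * Real.sinh (r / 2)) * (2 * Real.cosh (r / 2)) := by
          gcongr
          linarith
      _ = 2 * Real.sinh r := by rw [htwo]; ring
  have hsin : |Real.sin (s * r)| ≤ |s| * r := by
    simpa [abs_mul, abs_of_pos hr] using Real.abs_sin_le_abs (x := s * r)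
  calc ‖Real.sin (s * r) * (Real.sinh r / (c ^ 2 + Real.sinh r ^ 2))‖
      ≤ |s| * r * (Real.sinh r / Real.sinh r ^ 2) := by
        rw [norm_mul, Real.norm_eq_abs, Real.norm_of_nonneg (by positivity)]
        gcongr
        exact le_add_of_nonneg_left (sq_nonneg c)
    _ = |s| * (r / Real.sinh r) := by field_simp
    _ ≤ |s| * (2 * Real.exp (-(1 / 2 * r))) := by
        gcongr
        rw [div_le_iff₀ hsinh, Real.exp_neg, mul_assoc, mul_comm _⁻¹, ← mul_assoc,
          ← div_eq_mul_inv, le_div_iff₀ (Real.exp_pos _)]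
        exact hhalf
    _ = 2 * |s| * Real.exp (-(1 / 2 * r)) := by ring

lemma integrableOn_sin_mul_sinh_div :
    IntegrableOn (fun r => Real.sin (s * r) * (Real.sinh r / (c ^ 2 + Real.sinh r ^ 2)))
      (Set.Ioi 0) := by
  refine ((integrableOn_exp_neg_mul_Ioi one_half_pos).const_mul (2 * |s|)).mono'
    (Measurable.aestronglyMeasurable (by fun_prop)) ?_
  filter_upwards [ae_restrict_mem measurableSet_Ioi] with r hr
  exact norm_sin_mul_sinh_div_le s c hr

lemma tendsto_integral_sin_mul_sinh_div :
    Tendsto (fun c => ∫ r in Set.Ioi 0,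
        Real.sin (s * r) * (Real.sinh r / (c ^ 2 + Real.sinh r ^ 2))) (𝓝 0)
      (𝓝 (∫ r in Set.Ioi 0, Real.sin (s * r) / Real.sinh r)) := by
  refine tendsto_integral_filter_of_dominated_convergence
    (fun r => 2 * |s| * Real.exp (-(1 / 2 * r)))
    (Eventually.of_forall fun c => (integrableOn_sin_mul_sinh_div s c).aestronglyMeasurable)
    (Eventually.of_forall fun c => ?_)
    ((integrableOn_exp_neg_mul_Ioi one_half_pos).const_mul _) ?_
  · filter_upwards [ae_restrict_mem measurableSet_Ioi] with r hr
    exact norm_sin_mul_sinh_div_le s c hr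
  · filter_upwards [ae_restrict_mem measurableSet_Ioi] with r hr
    have hsinh : 0 < Real.sinh r := Real.sinh_pos_iff.mpr hr
    have hcont : ContinuousAt (fun c => Real.sin (s * r) *
        (Real.sinh r / (c ^ 2 + Real.sinh r ^ 2))) 0 := by
      fun_prop (disch := positivity)
    have hzero : Real.sin (s * r) / Real.sinh r =
        Real.sin (s * r) * (Real.sinh r / (0 ^ 2 + Real.sinh r ^ 2)) := by
      field_simp
      ring
    rw [hzero]
    exact hcont.tendsto

end SinKernel

section AbelMeanBesselSq

variable (s : ℝ) {c : ℝ}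

lemma integral_struveWeight_mul_sin_arsinh_swap (hc : 0 < c) :
    ∫ x in Set.Ioi 0, ∫ θ in Set.Ioo (-(Real.pi / 2)) (Real.pi / 2), struveWeight x *
        (Real.sin (s * Real.arsinh (c * x / Real.cos θ)) /
          (Real.cos θ * √(1 + (c * x / Real.cos θ) ^ 2))) =
      ∫ θ in Set.Ioo (-(Real.pi / 2)) (Real.pi / 2), ∫ x in Set.Ioi 0, struveWeight x *
        (Real.sin (s * Real.arsinh (c * x / Real.cos θ)) /
          (Real.cos θ * √(1 + (c * x / Real.cos θ) ^ 2))) := by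
  refine setIntegral_swap_of_norm_le (f := fun x θ => struveWeight x *
      (Real.sin (s * Real.arsinh (c * x / Real.cos θ)) /
        (Real.cos θ * √(1 + (c * x / Real.cos θ) ^ 2))))
    measurableSet_Ioi measurableSet_Ioo (by simp) ?_
    (integrableOn_struveWeight_div.div_const c) fun x hx θ hθ => ?_
  · have hcos : ∀ p ∈ Set.Ioi (0 : ℝ) ×ˢ Set.Ioo (-(Real.pi / 2)) (Real.pi / 2),
        Real.cos p.2 ≠ 0 := fun p hp => (Real.cos_pos_of_mem_Ioo hp.2).ne'
    have hquot : ContinuousOn (fun p : ℝ × ℝ => c * p.1 / Real.cos p.2)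
        (Set.Ioi 0 ×ˢ Set.Ioo (-(Real.pi / 2)) (Real.pi / 2)) :=
      ContinuousOn.div (by fun_prop) (by fun_prop) hcos
    have harsinh := Real.continuous_arsinh.comp_continuousOn hquot
    exact ((continuous_struveWeight.comp continuous_fst).continuousOn).mul
      ((Real.continuous_sin.comp_continuousOn (harsinh.const_mul s)).div
        (by fun_prop) fun p hp => mul_ne_zero (hcos p hp) (by positivity))
  · have hx : 0 < x := hx
    have hcos : 0 < Real.cos θ := Real.cos_pos_of_mem_Ioo hθ
    have hw := struveWeight_nonneg hx.le
    have hle : c * x ≤ Real.cos θ * √(1 + (c * x / Real.cos θ) ^ 2) := by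
      rw [← div_le_iff₀' hcos]
      exact Real.le_sqrt_of_sq_le (by linarith)
    calc ‖struveWeight x * (Real.sin (s * Real.arsinh (c * x / Real.cos θ)) /
            (Real.cos θ * √(1 + (c * x / Real.cos θ) ^ 2)))‖
        ≤ struveWeight x * (1 / (c * x)) := by
          rw [norm_mul, norm_div, Real.norm_of_nonneg hw,
            Real.norm_of_nonneg (by positivity : 0 ≤ Real.cos θ * _)]
          gcongr
          exact Real.abs_sin_le_one _
      _ = struveWeight x / x / c := by field_simp

lemma integral_struveWeight_mul_sin_arsinh {b : ℝ} (hb : 0 < b) (hc : 0 < c) :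
    ∫ x in Set.Ioi 0, struveWeight x * (Real.sin (s * Real.arsinh (c * x / b)) /
        (b * √(1 + (c * x / b) ^ 2))) =
      c⁻¹ * ∫ r in Set.Ioi 0, Real.sin (s * r) * struveWeight (b * (Real.sinh r / c)) := by
  rw [integral_Ioi_eq_integral_const_mul_sinh (div_pos hb hc), ← integral_const_mul]
  refine setIntegral_congr_fun measurableSet_Ioi fun r _ => ?_
  have hquot : c * (b / c * Real.sinh r) / b = Real.sinh r := by field_simp
  simp only [hquot, Real.arsinh_sinh, ← Real.cosh_sq', Real.sqrt_sq (Real.cosh_pos r).le,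
    smul_eq_mul]
  rw [div_mul_comm b c, mul_comm _ b]
  field_simp

lemma integral_sin_mul_struveWeight_cos_mul {r : ℝ} (hc : 0 < c) :
    ∫ θ in Set.Ioo (-(Real.pi / 2)) (Real.pi / 2),
        Real.sin (s * r) * struveWeight (Real.cos θ * (Real.sinh r / c)) =
      2 * c * (Real.sin (s * r) * (Real.sinh r / (c ^ 2 + Real.sinh r ^ 2))) := by
  rw [integral_const_mul, integral_struveWeight_mul_cos]
  field_simp

lemma integral_sin_mul_struveWeight_swap (hc : 0 < c) :
    ∫ θ in Set.Ioo (-(Real.pi / 2)) (Real.pi / 2), ∫ r in Set.Ioi 0,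
        Real.sin (s * r) * struveWeight (Real.cos θ * (Real.sinh r / c)) =
      ∫ r in Set.Ioi 0, ∫ θ in Set.Ioo (-(Real.pi / 2)) (Real.pi / 2),
        Real.sin (s * r) * struveWeight (Real.cos θ * (Real.sinh r / c)) := by
  have hcont : Continuous fun p : ℝ × ℝ =>
      Real.sin (s * p.1) * struveWeight (Real.cos p.2 * (Real.sinh p.1 / c)) :=
    Continuous.mul (by fun_prop) (continuous_struveWeight.comp (by fun_prop))
  refine (integral_integral_swap (f := fun r θ =>
    Real.sin (s * r) * struveWeight (Real.cos θ * (Real.sinh r / c))) ?_).symm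
  refine (integrable_prod_iff hcont.aestronglyMeasurable).mpr ⟨ae_of_all _ fun r => ?_, ?_⟩
  · exact ((hcont.comp (Continuous.prodMk_right r)).integrableOn_Icc).mono_set
      Set.Ioo_subset_Icc_self
  · refine ((integrableOn_sin_mul_sinh_div s c).norm.const_mul (2 * c)).congr ?_
    filter_upwards [ae_restrict_mem measurableSet_Ioi] with r hr
    have hsinh : 0 ≤ Real.sinh r := Real.sinh_nonneg_iff.mpr (le_of_lt hr)
    have hnorm : ∀ θ ∈ Set.Ioo (-(Real.pi / 2)) (Real.pi / 2),
        ‖Real.sin (s * r) * struveWeight (Real.cos θ * (Real.sinh r / c))‖ =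
          ‖Real.sin (s * r)‖ * struveWeight (Real.cos θ * (Real.sinh r / c)) := fun θ hθ => by
      rw [norm_mul, Real.norm_of_nonneg
        (struveWeight_nonneg (mul_nonneg (Real.cos_pos_of_mem_Ioo hθ).le (by positivity)))]
    rw [setIntegral_congr_fun measurableSet_Ioo hnorm, integral_const_mul,
      integral_struveWeight_mul_cos, norm_mul,
      Real.norm_of_nonneg (by positivity : 0 ≤ Real.sinh r / (c ^ 2 + Real.sinh r ^ 2))]
    field_simp

lemma abelMean_struveWeight_im_besselJ_I_mul_sq (τ : ℝ) (hc : 0 < c) :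
    abelMean struveWeight (fun x => (besselJ (Complex.I * τ) x ^ 2).im) (2 * c) =
      -(Real.pi)⁻¹ * ∫ r in Set.Ioi 0,
        Real.sin (2 * τ * r) * (Real.sinh r / (c ^ 2 + Real.sinh r ^ 2)) := by
  have hlaplace : ∀ x ∈ Set.Ioi (0 : ℝ), struveWeight x *
      laplace (fun x => (besselJ (Complex.I * τ) x ^ 2).im) (2 * c * x) =
      -(2 * Real.pi)⁻¹ * ∫ θ in Set.Ioo (-(Real.pi / 2)) (Real.pi / 2), struveWeight x *
        (Real.sin (2 * τ * Real.arsinh (c * x / Real.cos θ)) /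
          (Real.cos θ * √(1 + (c * x / Real.cos θ) ^ 2))) := fun x hx => by
    rw [laplace_im_besselJ_I_mul_sq τ (mul_pos (by positivity) hx), integral_const_mul,
      mul_left_comm]
    simp only [mul_assoc 2 c x, mul_div_mul_left (c * x) _ two_ne_zero]
  rw [abelMean, setIntegral_congr_fun measurableSet_Ioi hlaplace, integral_const_mul,
    integral_struveWeight_mul_sin_arsinh_swap (2 * τ) hc,
    setIntegral_congr_fun measurableSet_Ioo fun θ hθ =>
      integral_struveWeight_mul_sin_arsinh (2 * τ) (Real.cos_pos_of_mem_Ioo hθ) hc,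
    integral_const_mul,
    integral_sin_mul_struveWeight_swap (2 * τ) hc]
  simp only [integral_sin_mul_struveWeight_cos_mul _ hc, integral_const_mul]
  field_simp

end AbelMeanBesselSq

/-! ### Fourier sine integrals -/

section SechFourier

lemma betaIntegral_eq_integral_sigmoid (a b : ℂ) :
    Complex.betaIntegral a b =
      ∫ t : ℝ, (Real.sigmoid t : ℂ) ^ a * (Real.sigmoid (-t) : ℂ) ^ b := by
  rw [Complex.betaIntegral, intervalIntegral.integral_of_le zero_le_one,
    integral_Ioc_eq_integral_Ioo, ← Real.range_sigmoid, ← Set.image_univ,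
    integral_image_eq_integral_abs_deriv_smul MeasurableSet.univ
      (fun t _ => (Real.hasDerivAt_sigmoid t).hasDerivWithinAt) Real.sigmoid_injective.injOn,
    setIntegral_univ]
  refine integral_congr_ae (ae_of_all _ fun t => ?_)
  have hpos := Real.sigmoid_pos t
  have hneg := Real.sigmoid_pos (-t)
  have hsub : (1 : ℂ) - Real.sigmoid t = Real.sigmoid (-t) := by
    rw [Real.sigmoid_neg, Complex.ofReal_sub, Complex.ofReal_one]
  simp only [hsub, ← Real.sigmoid_neg, abs_of_pos (mul_pos hpos hneg), Complex.real_smul]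
  have hpos₀ : (Real.sigmoid t : ℂ) ≠ 0 := by exact_mod_cast hpos.ne'
  have hneg₀ : (Real.sigmoid (-t) : ℂ) ≠ 0 := by exact_mod_cast hneg.ne'
  rw [Complex.cpow_sub _ _ hpos₀, Complex.cpow_sub _ _ hneg₀, Complex.cpow_one, Complex.cpow_one,
    Complex.ofReal_mul]
  field_simp

lemma integral_cexp_mul_div_one_add_exp {a : ℂ} (ha₀ : 0 < a.re) (ha₁ : a.re < 1) :
    ∫ t : ℝ, Complex.exp (a * t) / (1 + Complex.exp t) = Real.pi / Complex.sin (Real.pi * a) := by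
  have hbeta := Complex.Gamma_mul_Gamma_eq_betaIntegral ha₀
    (t := 1 - a) (by simpa using ha₁)
  rw [Complex.Gamma_mul_Gamma_one_sub, add_sub_cancel, Complex.Gamma_one, one_mul,
    betaIntegral_eq_integral_sigmoid] at hbeta
  rw [hbeta]
  refine integral_congr_ae (ae_of_all _ fun t => ?_)
  have hneg := Real.sigmoid_pos (-t)
  have hsigmoid : Real.sigmoid t = Real.exp t * Real.sigmoid (-t) := by
    rw [← Real.sigmoid_mul_rexp_neg, mul_left_comm, ← Real.exp_add, add_neg_cancel,
      Real.exp_zero, mul_one]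
  have hexp : (Real.exp t : ℂ) ^ a = Complex.exp (a * t) := by
    rw [Complex.cpow_def_of_ne_zero (by exact_mod_cast (Real.exp_pos t).ne'),
      ← Complex.ofReal_log (Real.exp_pos t).le, Real.log_exp, mul_comm]
  simp only [hsigmoid]
  rw [Complex.ofReal_mul, Complex.mul_cpow_ofReal_nonneg (Real.exp_pos t).le hneg.le, hexp,
    mul_assoc, ← Complex.cpow_add _ _ (by exact_mod_cast hneg.ne'), add_sub_cancel,
    Complex.cpow_one, Real.sigmoid_def]
  push_cast
  rw [neg_neg, div_eq_mul_inv]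

lemma integral_cexp_I_mul_div_cosh (ν : ℝ) :
    ∫ s : ℝ, Complex.exp (Complex.I * ν * s) / Real.cosh s =
      (Real.pi / Real.cosh (Real.pi * ν / 2) : ℝ) := by
  have hscale := Measure.integral_comp_mul_left (fun t : ℝ =>
    Complex.exp ((1 + Complex.I * ν) / 2 * t) / (1 + Complex.exp t)) 2
  have hsin : Complex.sin (Real.pi * ((1 + Complex.I * ν) / 2)) =
      Real.cosh (Real.pi * ν / 2) := by
    have harg : (Real.pi : ℂ) * ((1 + Complex.I * ν) / 2) =
      (Real.pi * ν / 2 : ℝ) * Complex.I + Real.pi / 2 := by push_cast; ring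
    rw [harg, Complex.sin_add_pi_div_two, Complex.cos_mul_I, Complex.ofReal_cosh]
  have hcosh : ∀ s : ℝ, Complex.exp (Complex.I * ν * s) / Real.cosh s = 2 *
      (Complex.exp ((1 + Complex.I * ν) / 2 * (2 * s : ℝ)) / (1 + Complex.exp (2 * s : ℝ))) := by
    intro s
    have hnum : Complex.exp ((1 + Complex.I * ν) / 2 * (2 * s : ℝ)) =
        Complex.exp s * Complex.exp (Complex.I * ν * s) := by
      rw [← Complex.exp_add]
      push_cast
      ring_nf
    have hden : 1 + Complex.exp (2 * s : ℝ) = Complex.exp s * (2 * Real.cosh s) := by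
      rw [Complex.ofReal_cosh, Complex.two_cosh, mul_add, ← Complex.exp_add, ← Complex.exp_add,
        add_neg_cancel, Complex.exp_zero, Complex.ofReal_mul, Complex.ofReal_ofNat, two_mul,
        add_comm]
    rw [hnum, hden, mul_div_mul_left _ _ (Complex.exp_ne_zero _)]
    ring
  rw [integral_congr_ae (ae_of_all _ hcosh), integral_const_mul, hscale,
    integral_cexp_mul_div_one_add_exp (by simp) (by norm_num), hsin]
  rw [abs_of_pos (by norm_num : (0 : ℝ) < 2⁻¹), Complex.real_smul]
  push_cast
  ring

lemma integrable_cexp_I_mul_div_cosh (ν : ℝ) :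
    Integrable fun s : ℝ => Complex.exp (Complex.I * ν * s) / Real.cosh s := by
  refine (integrable_inv_one_add_sq.const_mul 2).mono'
    (Measurable.aestronglyMeasurable (by fun_prop)) (ae_of_all _ fun s => ?_)
  have hcosh : (1 + s ^ 2) / 2 ≤ Real.cosh s := by
    have hhalf : (s / 2) ^ 2 ≤ Real.sinh (s / 2) ^ 2 :=
      sq_le_sq.mpr (by rw [Real.abs_sinh]; exact Real.self_le_sinh_iff.mpr (abs_nonneg _))
    have htwo := Real.cosh_two_mul (s / 2)
    rw [mul_div_cancel₀ s two_ne_zero, Real.cosh_sq] at htwo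
    linarith
  have hnorm : ‖Complex.exp (Complex.I * ν * s)‖ = 1 := by simp [Complex.norm_exp]
  rw [norm_div, hnorm, Complex.norm_real, Real.norm_of_nonneg (Real.cosh_pos s).le,
    ← div_eq_mul_inv, div_le_div_iff₀ (Real.cosh_pos s) (by positivity)]
  linarith

variable (s u : ℝ)

lemma cexp_mul_cexp_div_cosh_sub_im (r : ℝ) :
    (Complex.exp ((s * u : ℝ) * Complex.I) *
      (Complex.exp (Complex.I * s * (r - u : ℝ)) / Real.cosh (r - u))).im =
        Real.sin (s * r) / Real.cosh (r - u) := by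
  have harg : (s * u : ℝ) * Complex.I + Complex.I * s * (r - u : ℝ) =
      (s * r : ℝ) * Complex.I := by push_cast; ring
  rw [← mul_div_assoc, ← Complex.exp_add, harg, Complex.div_ofReal_im,
    Complex.exp_ofReal_mul_I_im]

lemma integrable_sin_mul_div_cosh_sub :
    Integrable fun r => Real.sin (s * r) / Real.cosh (r - u) := by
  have him := (((integrable_cexp_I_mul_div_cosh s).comp_sub_right u).const_mul
    (Complex.exp ((s * u : ℝ) * Complex.I))).im
  simpa only [RCLike.im_to_complex, cexp_mul_cexp_div_cosh_sub_im] using him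

lemma integral_sin_mul_div_cosh_sub :
    ∫ r : ℝ, Real.sin (s * r) / Real.cosh (r - u) =
      Real.sin (s * u) * (Real.pi / Real.cosh (Real.pi * s / 2)) := by
  have him := integral_im (((integrable_cexp_I_mul_div_cosh s).comp_sub_right u).const_mul
    (Complex.exp ((s * u : ℝ) * Complex.I)))
  simp only [RCLike.im_to_complex, cexp_mul_cexp_div_cosh_sub_im] at him
  rw [him, integral_const_mul, integral_sub_right_eq_self (fun r : ℝ =>
    Complex.exp (Complex.I * s * r) / Real.cosh r) u, integral_cexp_I_mul_div_cosh,
    Complex.im_mul_ofReal, Complex.exp_ofReal_mul_I_im]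

variable {u}

lemma sin_mul_sinh_div_cosh_sq_add_sinh_sq (hu : u ≠ 0) (r : ℝ) :
    Real.sin (s * r) * (Real.sinh r / (Real.cosh u ^ 2 + Real.sinh r ^ 2)) =
      (2 * Real.sinh u)⁻¹ * (Real.sin (s * r) / Real.cosh (r - u) -
        Real.sin (s * r) / Real.cosh (r - -u)) := by
  have hsinh : Real.sinh u ≠ 0 := by rwa [Ne, Real.sinh_eq_zero]
  have hdiff : Real.cosh (r + u) - Real.cosh (r - u) = 2 * Real.sinh u * Real.sinh r := by
    rw [Real.cosh_sub, Real.cosh_add]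
    ring
  have hprod : Real.cosh u ^ 2 + Real.sinh r ^ 2 = Real.cosh (r - u) * Real.cosh (r + u) := by
    rw [Real.cosh_sub, Real.cosh_add]
    linear_combination
      (1 - Real.cosh r ^ 2) * Real.cosh_sq u - (Real.sinh u ^ 2 + 1) * Real.cosh_sq r
  rw [hprod, sub_neg_eq_add]
  field_simp
  linear_combination -Real.sin (s * r) * hdiff

lemma integral_sin_mul_sinh_div_cosh_sq_add_sinh_sq (hu : u ≠ 0) :
    ∫ r in Set.Ioi 0, Real.sin (s * r) * (Real.sinh r / (Real.cosh u ^ 2 + Real.sinh r ^ 2)) =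
      Real.pi * Real.sin (s * u) / (2 * Real.sinh u * Real.cosh (Real.pi * s / 2)) := by
  have heven : ∀ r : ℝ, Real.sin (s * |r|) *
      (Real.sinh |r| / (Real.cosh u ^ 2 + Real.sinh |r| ^ 2)) =
        Real.sin (s * r) * (Real.sinh r / (Real.cosh u ^ 2 + Real.sinh r ^ 2)) := by
    intro r
    rcases abs_choice r with hr | hr <;> rw [hr]
    rw [Real.sinh_neg, mul_neg, Real.sin_neg]
    ring
  have hline : ∫ r : ℝ, Real.sin (s * r) *
      (Real.sinh r / (Real.cosh u ^ 2 + Real.sinh r ^ 2)) =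
        (2 * Real.sinh u)⁻¹ * (2 * Real.sin (s * u) * (Real.pi / Real.cosh (Real.pi * s / 2))) := by
    simp only [sin_mul_sinh_div_cosh_sq_add_sinh_sq s hu]
    rw [integral_const_mul, integral_sub (integrable_sin_mul_div_cosh_sub s u)
      (integrable_sin_mul_div_cosh_sub s (-u)), integral_sin_mul_div_cosh_sub,
      integral_sin_mul_div_cosh_sub, mul_neg, Real.sin_neg]
    ring
  have habs := integral_comp_abs (f := fun r =>
    Real.sin (s * r) * (Real.sinh r / (Real.cosh u ^ 2 + Real.sinh r ^ 2)))
  simp only [heven] at habs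
  rw [hline] at habs
  rw [eq_comm, ← mul_right_inj' (two_ne_zero' ℝ), ← habs]
  field_simp

end SechFourier

section SinDivSinh

lemma hasSum_two_mul_div_sq_add_succ_sq {y : ℝ} (hy : y ≠ 0) :
    HasSum (fun k : ℕ => 2 * y / (y ^ 2 + (k + 1) ^ 2))
      (Real.pi * Real.cosh (Real.pi * y) / Real.sinh (Real.pi * y) - 1 / y) := by
  have hz : Complex.I * y ∈ Complex.integerComplement := by
    rw [Complex.mem_integerComplement_iff]
    rintro ⟨m, hm⟩
    simpa [eq_comm, hy] using congrArg Complex.im hm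
  have hcot := (summable_cotTerm hz).hasSum.mul_left Complex.I
  have htsum : ∑' k, cotTerm (Complex.I * y) k = _ := (cot_series_rep' hz).symm
  rw [htsum] at hcot
  have hy₀ : (y : ℂ) ≠ 0 := by exact_mod_cast hy
  have hvalue : Complex.I * (Real.pi * Complex.cot (Real.pi * (Complex.I * y)) -
      1 / (Complex.I * y)) =
        (Real.pi * Real.cosh (Real.pi * y) / Real.sinh (Real.pi * y) - 1 / y : ℝ) := by
    have hsinh : Complex.sinh (Real.pi * y) ≠ 0 := by
      have : Real.sinh (Real.pi * y) ≠ 0 := by simp [Real.sinh_eq_zero, Real.pi_ne_zero, hy]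
      exact_mod_cast this
    have harg : (Real.pi : ℂ) * (Complex.I * y) = Real.pi * y * Complex.I := by ring
    rw [Complex.cot_eq_cos_div_sin, harg, Complex.cos_mul_I, Complex.sin_mul_I]
    push_cast
    field_simp
  rw [hvalue] at hcot
  refine Complex.hasSum_ofReal.mp (hcot.congr_fun fun k => ?_)
  have hden : (y : ℂ) ^ 2 + (k + 1) ^ 2 ≠ 0 := by
    have : y ^ 2 + (k + 1 : ℝ) ^ 2 ≠ 0 := by positivity
    exact_mod_cast this
  have hprod : (Complex.I * y + (k + 1)) * (Complex.I * y - (k + 1)) =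
      -((y : ℂ) ^ 2 + (k + 1) ^ 2) := by
    linear_combination (y : ℂ) ^ 2 * Complex.I_sq
  rw [cotTerm_identity hz, hprod]
  push_cast
  field_simp
  linear_combination Complex.I_sq

lemma hasSum_two_mul_div_sq_add_odd_sq {y : ℝ} (hy : y ≠ 0) :
    HasSum (fun k : ℕ => 2 * y / (y ^ 2 + (2 * k + 1) ^ 2))
      (Real.pi / 2 * Real.tanh (Real.pi * y / 2)) := by
  have hall := hasSum_two_mul_div_sq_add_succ_sq hy
  have hodd : HasSum (fun k : ℕ => 2 * y / (y ^ 2 + ((2 * k + 1 : ℕ) + 1) ^ 2))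
      (1 / 2 * (Real.pi * Real.cosh (Real.pi * (y / 2)) / Real.sinh (Real.pi * (y / 2)) -
        1 / (y / 2))) := by
    refine ((hasSum_two_mul_div_sq_add_succ_sq (div_ne_zero hy two_ne_zero)).mul_left
      (1 / 2)).congr_fun fun k => ?_
    push_cast
    field_simp
    ring
  have heven : Summable fun k : ℕ => 2 * y / (y ^ 2 + ((2 * k : ℕ) + 1) ^ 2) :=
    hall.summable.comp_injective (i := fun k : ℕ => 2 * k) (mul_right_injective₀ two_ne_zero)
  have hsplit := (HasSum.even_add_odd
    (f := fun k : ℕ => 2 * y / (y ^ 2 + (k + 1) ^ 2)) heven.hasSum hodd).unique hall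
  have hvalue : Real.pi / 2 * Real.tanh (Real.pi * y / 2) =
      ∑' k : ℕ, 2 * y / (y ^ 2 + ((2 * k : ℕ) + 1) ^ 2) := by
    have hsinh : Real.sinh (Real.pi * y / 2) ≠ 0 := by
      simp [Real.sinh_eq_zero, Real.pi_ne_zero, hy]
    have hdouble : Real.pi * y = 2 * (Real.pi * y / 2) := by ring
    rw [eq_sub_of_add_eq hsplit, Real.tanh_eq_sinh_div_cosh, ← mul_div_assoc Real.pi y 2, hdouble,
      Real.cosh_two_mul, Real.sinh_two_mul, ← hdouble]
    field_simp
    ring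
  rw [hvalue]
  exact_mod_cast heven.hasSum

lemma laplace_sin (s : ℝ) {b : ℝ} (hb : 0 < b) :
    laplace (fun r => Real.sin (s * r)) b = s / (s ^ 2 + b ^ 2) := by
  have hre : (-b + s * Complex.I).re < 0 := by simpa using hb
  have him : ∀ r : ℝ, Real.exp (-(b * r)) • Real.sin (s * r) =
      (Complex.exp ((-b + s * Complex.I) * r)).im := by
    intro r
    simp [Complex.exp_im]
  have hint := integral_im (integrableOn_exp_mul_complex_Ioi hre 0)
  simp only [RCLike.im_to_complex] at hint
  have hmk : (-b + s * Complex.I : ℂ) = ⟨-b, s⟩ := Complex.ext (by simp) (by simp)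
  simp only [laplace, him]
  rw [hint, integral_exp_mul_complex_Ioi hre, Complex.ofReal_zero, mul_zero, Complex.exp_zero,
    neg_div, one_div, Complex.neg_im, Complex.inv_im, hmk, Complex.normSq_mk]
  ring

lemma integrableOn_exp_neg_mul_smul_self {b : ℝ} (hb : 0 < b) :
    IntegrableOn (fun r => Real.exp (-(b * r)) • r) (Set.Ioi 0) := by
  simpa [mul_comm] using
    integrableOn_rpow_mul_exp_neg_mul_rpow (s := 1) (p := 1) (b := b) (by norm_num) one_pos hb

lemma laplace_id {b : ℝ} (hb : 0 < b) : laplace (fun r => r) b = 1 / b ^ 2 := by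
  have hgamma := Real.integral_rpow_mul_exp_neg_mul_Ioi (a := 2) (r := b) two_pos hb
  rw [Real.Gamma_two, mul_one] at hgamma
  norm_num at hgamma
  rw [laplace, one_div, ← hgamma]
  simp only [smul_eq_mul, mul_comm]

lemma hasSum_two_mul_exp_neg_odd_mul {r : ℝ} (hr : 0 < r) :
    HasSum (fun k : ℕ => 2 * Real.exp (-((2 * k + 1) * r))) (1 / Real.sinh r) := by
  have hlt : Real.exp (-(2 * r)) < 1 := Real.exp_lt_one_iff.mpr (by linarith)
  have hgeom := (hasSum_geometric_of_lt_one (Real.exp_pos _).le hlt).mul_left (2 * Real.exp (-r))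
  have hvalue : 2 * Real.exp (-r) * (1 - Real.exp (-(2 * r)))⁻¹ = 1 / Real.sinh r := by
    have hfactor : 1 - Real.exp (-(2 * r)) = 2 * Real.exp (-r) * Real.sinh r := by
      rw [Real.sinh_eq, mul_div_assoc', mul_assoc, mul_sub, ← Real.exp_add, ← Real.exp_add,
        neg_add_cancel, Real.exp_zero]
      ring_nf
    rw [hfactor]
    field_simp
  rw [hvalue] at hgeom
  refine hgeom.congr_fun fun k => ?_
  rw [← Real.exp_nat_mul, mul_assoc, ← Real.exp_add]
  ring_nf

section Integrals

variable (s : ℝ) {b : ℝ}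

lemma integrableOn_exp_neg_mul_smul_sin (hb : 0 < b) :
    IntegrableOn (fun r => Real.exp (-(b * r)) • Real.sin (s * r)) (Set.Ioi 0) :=
  integrableOn_exp_neg_mul_smul_of_norm_le hb (by fun_prop) fun _ _ => Real.abs_sin_le_one _

lemma integral_norm_exp_neg_mul_smul_sin_le (hb : 0 < b) :
    ∫ r in Set.Ioi 0, ‖Real.exp (-(b * r)) • Real.sin (s * r)‖ ≤ |s| * (1 / b ^ 2) := by
  rw [← laplace_id hb, laplace, ← integral_const_mul]
  refine setIntegral_mono_on (integrableOn_exp_neg_mul_smul_sin s hb).norm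
    ((integrableOn_exp_neg_mul_smul_self hb).const_mul _) measurableSet_Ioi fun r hr => ?_
  have hsin : ‖Real.sin (s * r)‖ ≤ |s| * r := by
    simpa [abs_mul, abs_of_pos (Set.mem_Ioi.mp hr)] using Real.abs_sin_le_abs (x := s * r)
  rw [norm_exp_neg_mul_smul, smul_eq_mul, mul_left_comm]
  gcongr

lemma integral_sin_div_sinh :
    ∫ r in Set.Ioi 0, Real.sin (s * r) / Real.sinh r =
      Real.pi / 2 * Real.tanh (Real.pi * s / 2) := by
  rcases eq_or_ne s 0 with rfl | hs
  · simp
  have hodd : ∀ k : ℕ, (0 : ℝ) < 2 * k + 1 := fun k => by positivity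
  have hint : ∀ k : ℕ, IntegrableOn
      (fun r => 2 * Real.exp (-((2 * k + 1) * r)) • Real.sin (s * r)) (Set.Ioi 0) := fun k =>
    (integrableOn_exp_neg_mul_smul_sin s (hodd k)).const_mul 2
  have hsq : Summable fun k : ℕ => 1 / (2 * k + 1 : ℝ) ^ 2 := by
    exact_mod_cast (Real.summable_one_div_nat_pow.mpr one_lt_two).comp_injective
      (i := fun k : ℕ => 2 * k + 1) fun _ _ h => by simpa using h
  have hsummable : Summable fun k : ℕ =>
      ∫ r in Set.Ioi 0, ‖2 * Real.exp (-((2 * k + 1) * r)) • Real.sin (s * r)‖ := by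
    simp only [norm_mul (2 : ℝ), integral_const_mul]
    refine Summable.mul_left _ (Summable.of_nonneg_of_le (fun k => integral_nonneg fun _ =>
      norm_nonneg _) (fun k => ?_) (hsq.mul_left |s|))
    exact integral_norm_exp_neg_mul_smul_sin_le s (hodd k)
  have hterm : ∀ k : ℕ, ∫ r in Set.Ioi 0,
      2 * Real.exp (-((2 * k + 1) * r)) • Real.sin (s * r) =
        2 * s / (s ^ 2 + (2 * k + 1) ^ 2) := fun k => by
    rw [integral_const_mul, ← laplace, laplace_sin s (hodd k), mul_div_assoc]
  have hswap := hasSum_integral_of_summable_integral_norm hint hsummable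
  simp only [hterm] at hswap
  rw [← hswap.unique (hasSum_two_mul_div_sq_add_odd_sq hs)]
  refine setIntegral_congr_fun measurableSet_Ioi fun r hr => ?_
  have hsinh := (hasSum_two_mul_exp_neg_odd_mul hr).mul_right (Real.sin (s * r))
  simp only [smul_eq_mul, ← mul_assoc]
  rw [hsinh.tsum_eq, one_div_mul_eq_div]

end Integrals

end SinDivSinh

section StruveBessel

variable (τ : ℝ)

lemma tendsto_abelMean_struveWeight_im_besselJ_I_mul_sq :
    Tendsto (abelMean struveWeight fun x => (besselJ (Complex.I * τ) x ^ 2).im) (𝓝[>] 0)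
      (𝓝 (-(Real.tanh (Real.pi * τ) / 2))) := by
  have hhalf : Tendsto (fun ε : ℝ => ε / 2) (𝓝[>] 0) (𝓝 0) :=
    (Continuous.tendsto' (by fun_prop) 0 0 (zero_div 2)).mono_left nhdsWithin_le_nhds
  have hlim := ((tendsto_integral_sin_mul_sinh_div (2 * τ)).comp hhalf).const_mul (-(Real.pi)⁻¹)
  have hvalue : -(Real.pi)⁻¹ * ∫ r in Set.Ioi 0, Real.sin (2 * τ * r) / Real.sinh r =
      -(Real.tanh (Real.pi * τ) / 2) := by
    rw [integral_sin_div_sinh, mul_left_comm Real.pi, mul_div_cancel_left₀ _ two_ne_zero]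
    field_simp
  rw [hvalue] at hlim
  refine hlim.congr' ?_
  filter_upwards [self_mem_nhdsWithin] with ε hε
  rw [← mul_div_cancel₀ ε two_ne_zero,
    abelMean_struveWeight_im_besselJ_I_mul_sq τ (half_pos hε), mul_div_cancel₀ ε two_ne_zero]
  rfl

lemma abelMean_struveWeight_im_besselJ_I_mul_sq_cosh {u : ℝ} (hu : u ≠ 0) :
    abelMean struveWeight (fun x => (besselJ (Complex.I * τ) x ^ 2).im) (2 * Real.cosh u) =
      -(Real.sin (2 * τ * u) / (2 * Real.sinh u * Real.cosh (Real.pi * τ))) := by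
  rw [abelMean_struveWeight_im_besselJ_I_mul_sq τ (Real.cosh_pos u),
    integral_sin_mul_sinh_div_cosh_sq_add_sinh_sq _ hu, mul_left_comm Real.pi,
    mul_div_cancel_left₀ _ two_ne_zero]
  field_simp

lemma continuousOn_im_besselJ_sq (ν : ℂ) :
    ContinuousOn (fun x => (besselJ ν x ^ 2).im) (Set.Ioi 0) :=
  Complex.continuous_im.comp_continuousOn (continuousOn_besselJ_sq ν)

lemma exists_norm_im_besselJ_I_mul_sq_le :
    ∃ B : ℝ, ∀ x > 0, ‖(besselJ (Complex.I * τ) x ^ 2).im‖ ≤ B := by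
  obtain ⟨B, hB⟩ := exists_norm_besselJ_I_mul_sq_le τ
  exact ⟨B, fun x hx => (Complex.abs_im_le_norm _).trans (hB x hx)⟩

lemma tendsto_integral_im_besselJ_I_mul_sq :
    Tendsto (fun T => ∫ x in (0 : ℝ)..T, (besselJ (Complex.I * τ) x ^ 2).im) atTop
      (𝓝 (-(Real.tanh (Real.pi * τ) / 2))) := by
  obtain ⟨B, hB⟩ := exists_norm_im_besselJ_I_mul_sq_le τ
  obtain ⟨e, l, hlog⟩ := exists_tendsto_integral_im_besselJ_sq_sub_log τ
  exact isAbelWeight_struveWeight.tendsto_integral_of_tendsto_abelMean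
    (continuousOn_im_besselJ_sq _) hB (tendsto_abelMean_struveWeight_im_besselJ_I_mul_sq τ) hlog

lemma integral_mul_struveK0_mul {c T : ℝ} (hc : 0 < c) (hT : 0 ≤ T) (F : ℝ → ℝ) :
    ∫ x in (0 : ℝ)..T, x * struveK0 (2 * x * c) * F x =
      (Real.pi * c)⁻¹ * ∫ x in (0 : ℝ)..T, (1 - laplace struveWeight (2 * c * x)) * F x := by
  simp only [intervalIntegral.integral_of_le hT, ← integral_const_mul]
  refine setIntegral_congr_fun measurableSet_Ioc fun x hx => ?_
  have hstruve := self_mul_struveK0 (y := 2 * c * x) (mul_pos (by positivity) hx.1)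
  simp only [mul_right_comm 2 x c]
  field_simp at hstruve ⊢
  linear_combination F x * hstruve

lemma tendsto_integral_mul_struveK0_mul_im_besselJ_I_mul_sq {u : ℝ} (hu : u ≠ 0) :
    Tendsto (fun T => ∫ x in (0 : ℝ)..T,
        x * struveK0 (2 * x * Real.cosh u) * (besselJ (Complex.I * τ) x ^ 2).im) atTop
      (𝓝 ((Real.pi * Real.cosh u)⁻¹ *
        (Real.sin (2 * τ * u) / (2 * Real.sinh u * Real.cosh (Real.pi * τ)) -
          Real.tanh (Real.pi * τ) / 2))) := by
  obtain ⟨B, hB⟩ := exists_norm_im_besselJ_I_mul_sq_le τ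
  have hlim := (isAbelWeight_struveWeight.tendsto_integral_one_sub_laplace_mul
    (continuousOn_im_besselJ_sq _) hB (tendsto_integral_im_besselJ_I_mul_sq τ)
    (mul_pos two_pos (Real.cosh_pos u))).const_mul (Real.pi * Real.cosh u)⁻¹
  rw [abelMean_struveWeight_im_besselJ_I_mul_sq_cosh τ hu, neg_sub_neg] at hlim
  refine hlim.congr' ?_
  filter_upwards [eventually_ge_atTop 0] with T hT
  rw [integral_mul_struveK0_mul (Real.cosh_pos u) hT]

end StruveBessel

theorem statement18_general (u : ℝ) (hu : u ≠ 0) (ν : ℝ) (hν : ν ≠ 0) :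
    Tendsto (fun T : ℝ => ∫ x in (0 : ℝ)..T,
        x * struveK0 (2 * x * Real.cosh u) * ((besselJ (Complex.I * ν / 2) x) ^ 2).im) atTop
      (𝓝 (Real.sinh (Real.pi * ν / 2) *
        (2 * Real.sin (ν * u) / (Real.pi * Real.sinh (Real.pi * ν) * Real.sinh (2 * u)) -
          1 / (2 * Real.pi * Real.cosh (Real.pi * ν / 2) * Real.cosh u)))) := by
  obtain ⟨τ, rfl⟩ : ∃ τ, ν = 2 * τ := ⟨ν / 2, by ring⟩
  have hτ : τ ≠ 0 := right_ne_zero_of_mul hν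
  have horder : Complex.I * (2 * τ : ℝ) / 2 = Complex.I * τ := by push_cast; ring
  have harg : Real.pi * (2 * τ) / 2 = Real.pi * τ := by ring
  have hsinh : Real.sinh u ≠ 0 := Real.sinh_eq_zero.not.mpr hu
  have hsinhτ : Real.sinh (Real.pi * τ) ≠ 0 :=
    Real.sinh_eq_zero.not.mpr (mul_ne_zero Real.pi_ne_zero hτ)
  rw [horder, harg, mul_left_comm Real.pi, Real.sinh_two_mul, Real.sinh_two_mul]
  convert tendsto_integral_mul_struveK0_mul_im_besselJ_I_mul_sq τ hu using 2
  rw [Real.tanh_eq_sinh_div_cosh]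
  field_simp

theorem statement18 (u : ℝ) (hu : u ∈ Set.Icc (-Real.pi) Real.pi) (hu0 : u ≠ 0)
    (n : ℕ) (hn : 1 ≤ n) :
    Filter.Tendsto (fun T : ℝ => ∫ x in (0 : ℝ)..T,
        x * struveK0 (2 * x * Real.cosh u) * ((besselJ (Complex.I * n / 2) x) ^ 2).im)
      Filter.atTop
      (𝓝 (Real.sinh (Real.pi * n / 2) *
        (2 * Real.sin (n * u) / (Real.pi * Real.sinh (Real.pi * n) * Real.sinh (2 * u)) -
          1 / (2 * Real.pi * Real.cosh (Real.pi * n / 2) * Real.cosh u)))) := by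
  exact_mod_cast statement18_general u hu0 n (Nat.cast_ne_zero.mpr (Nat.one_le_iff_ne_zero.mp hn))
end

section
/- For every u ∈ [−π, π] with u ≠ 0 and every n ∈ ℕ, n ≥ 1, ∫₀^∞ cos(nt) / (cosh t · (cosh t + cosh u)) dt = π/(2·cosh(πn/2)·cosh u) − 2π·sin(nu)/(sinh(πn)·sinh(2u)). -/
open MeasureTheory Filter Topology

/-!
Partial fractions reduce the integral to the cosine transforms of `1 / cosh t` and
`1 / (cosh t + cosh u)`. Both come from the sigmoid `σ t = 1 / (1 + exp (-t))`: substituting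
`s = σ t` in Euler's beta integral gives the Fourier transform of `(σ (1 - σ)) ^ c` as a product of
Gamma values, which the reflection formula evaluates for `c = 1/2`, where
`σ (1 - σ) = (2 cosh (t / 2))⁻²`, and for `c = 1`, where `σ (1 - σ) = σ'`. Finally
`sinh u / (cosh t + cosh u) = σ (t + u) - σ (t - u)`, so its transform follows from that of `σ'` by
the translation and differentiation rules.
-/

open scoped FourierTransform

section FourierIntegral

variable {E : Type*} [NormedAddCommGroup E] [NormedSpace ℂ E]

lemma fourier_const_smul (c : ℂ) (f : ℝ → E) (ξ : ℝ) : 𝓕 (fun t ↦ c • f t) ξ = c • 𝓕 f ξ :=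
  congrFun (VectorFourier.fourierIntegral_const_smul _ volume _ f c) ξ

lemma fourier_sub {f g : ℝ → E} (hf : Integrable f) (hg : Integrable g) (ξ : ℝ) :
    𝓕 (fun t ↦ f t - g t) ξ = 𝓕 f ξ - 𝓕 g ξ := by
  rw [Real.fourier_eq, Real.fourier_eq, Real.fourier_eq,
    ← integral_sub ((Real.fourierIntegral_convergent_iff ξ).2 hf)
      ((Real.fourierIntegral_convergent_iff ξ).2 hg)]
  simp only [smul_sub]

lemma fourier_comp_add_right (f : ℝ → E) (v ξ : ℝ) :
    𝓕 (fun t ↦ f (t + v)) ξ = Real.fourierChar (v * ξ) • 𝓕 f ξ := by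
  have h := congrFun (Fourier.fourierIntegral_comp_add_right Real.fourierChar volume f v) ξ
  simpa only [Fourier.fourierIntegral_def, Real.fourier_real_eq, Function.comp_apply] using h

lemma fourier_comp_mul_left (f : ℝ → E) {a : ℝ} (ha : a ≠ 0) (ξ : ℝ) :
    𝓕 (fun t ↦ f (a * t)) ξ = |a⁻¹| • 𝓕 f (ξ / a) := by
  rw [Real.fourier_real_eq, Real.fourier_real_eq,
    ← Measure.integral_comp_mul_left (fun t ↦ Real.fourierChar (-(t * (ξ / a))) • f t) a]
  congr! 4 with t
  field_simp

lemma fourier_add_sub_sub_of_hasDerivAt {f f' : ℝ → E} (hf : ∀ t, HasDerivAt f (f' t) t)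
    (hf' : Integrable f') {v : ℝ} (hfv : Integrable fun t ↦ f (t + v) - f (t - v)) (ξ : ℝ) :
    (Real.pi * ξ) • 𝓕 (fun t ↦ f (t + v) - f (t - v)) ξ
      = Real.sin (2 * Real.pi * ξ * v) • 𝓕 f' ξ := by
  have integrable_shift (r : ℝ) : Integrable fun t ↦ f' (t + r) := hf'.comp_add_right r
  have hasDerivAt_diff (t : ℝ) :
      HasDerivAt (fun t ↦ f (t + v) - f (t - v)) (f' (t + v) - f' (t + -v)) t :=
    ((hf _).comp_add_const t v).sub ((hf _).comp_add_const t (-v))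
  have deriv_diff : deriv (fun t ↦ f (t + v) - f (t - v)) = fun t ↦ f' (t + v) - f' (t + -v) :=
    funext fun t ↦ (hasDerivAt_diff t).deriv
  have phase_sub : (Real.fourierChar (v * ξ) - Real.fourierChar (-v * ξ) : ℂ)
      = 2 * Complex.I * Real.sin (2 * Real.pi * ξ * v) := by
    rw [Real.fourierChar_apply, Real.fourierChar_apply, Complex.ofReal_sin, Complex.sin]
    push_cast
    ring_nf
    rw [Complex.I_sq]
    ring
  have fourier_deriv_diff := congrFun (Real.fourier_deriv hfv
    (fun t ↦ (hasDerivAt_diff t).differentiableAt)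
    (deriv_diff ▸ (integrable_shift v).sub (integrable_shift (-v)))) ξ
  rw [deriv_diff, fourier_sub (integrable_shift v) (integrable_shift (-v)), fourier_comp_add_right,
    fourier_comp_add_right, Circle.smul_def, Circle.smul_def, ← sub_smul, phase_sub]
    at fourier_deriv_diff
  have two_I_ne_zero : 2 * Complex.I ≠ 0 := mul_ne_zero two_ne_zero Complex.I_ne_zero
  rw [← smul_right_inj two_I_ne_zero, ← Complex.coe_smul, ← Complex.coe_smul, smul_smul, smul_smul,
    fourier_deriv_diff]
  congr 1
  push_cast
  ring

lemma integral_Ioi_mul_cos_eq_re_fourier {f : ℝ → ℝ} (hf : Function.Even f) (hfi : Integrable f)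
    (w : ℝ) :
    ∫ t in Set.Ioi (0 : ℝ), f t * Real.cos (w * t)
      = (𝓕 (fun t ↦ (f t : ℂ)) (w / (2 * Real.pi))).re / 2 := by
  have fourier_re : (𝓕 (fun t ↦ (f t : ℂ)) (w / (2 * Real.pi))).re
      = ∫ t, f t * Real.cos (w * t) := by
    have hfi' : Integrable fun t ↦ (f t : ℂ) := hfi.ofReal
    rw [Real.fourier_eq, ← RCLike.re_eq_complex_re,
      ← integral_re ((Real.fourierIntegral_convergent_iff (w / (2 * Real.pi))).2 hfi')]
    congr 1 with t
    have phase : 2 * Real.pi * -(w / (2 * Real.pi) * t) = -(w * t) := by field_simp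
    rw [Circle.smul_def, Real.fourierChar_apply, smul_eq_mul]
    simp only [RCLike.inner_apply, conj_trivial]
    rw [phase, mul_comm, RCLike.re_eq_complex_re, Complex.re_ofReal_mul,
      Complex.exp_ofReal_mul_I_re, Real.cos_neg]
  have even_integrand (t : ℝ) : f |t| * Real.cos (w * |t|) = f t * Real.cos (w * t) := by
    rcases abs_choice t with h | h <;> simp [h, hf t]
  have halve := integral_comp_abs (f := fun t ↦ f t * Real.cos (w * t))
  simp only [even_integrand] at halve
  rw [fourier_re, halve, mul_div_cancel_left₀ _ two_ne_zero]

end FourierIntegral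

section Sigmoid

lemma sigmoid_mul_one_sub_sigmoid_eq_inv_sq (t : ℝ) :
    Real.sigmoid t * (1 - Real.sigmoid t) = (2 * Real.cosh (t / 2))⁻¹ ^ 2 := by
  have exp_sq : Real.exp t = Real.exp (t / 2) ^ 2 := by
    rw [← Real.exp_nat_mul]; ring_nf
  rw [Real.sigmoid_def, Real.cosh_eq, Real.exp_neg, Real.exp_neg, exp_sq]
  have := Real.exp_pos (t / 2)
  field_simp
  ring

lemma sigmoid_mul_one_sub_sigmoid_cpow_half (t : ℝ) :
    (Real.sigmoid t * (1 - Real.sigmoid t) : ℂ) ^ (1 / 2 : ℂ)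
      = (((2 * Real.cosh (t / 2))⁻¹ : ℝ) : ℂ) := by
  have rpow_half : (Real.sigmoid t * (1 - Real.sigmoid t)) ^ (1 / 2 : ℝ)
      = (2 * Real.cosh (t / 2))⁻¹ := by
    rw [sigmoid_mul_one_sub_sigmoid_eq_inv_sq, ← Real.sqrt_eq_rpow, Real.sqrt_sq (by positivity)]
  have nonneg : 0 ≤ Real.sigmoid t * (1 - Real.sigmoid t) := by
    rw [sigmoid_mul_one_sub_sigmoid_eq_inv_sq]
    positivity
  rw [← rpow_half, Complex.ofReal_cpow nonneg]
  push_cast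
  rfl

lemma sigmoid_mul_one_sub_sigmoid_eq_inv_cosh_add_one (t : ℝ) :
    Real.sigmoid t * (1 - Real.sigmoid t) = 2⁻¹ * (Real.cosh t + 1)⁻¹ := by
  rw [Real.sigmoid_def, Real.cosh_eq, Real.exp_neg]
  have := Real.exp_pos t
  field_simp
  ring

lemma sigmoid_add_sub_sigmoid_sub (t u : ℝ) :
    Real.sigmoid (t + u) - Real.sigmoid (t - u)
      = Real.sinh u * (Real.cosh t + Real.cosh u)⁻¹ := by
  rw [Real.sigmoid_def, Real.sigmoid_def, Real.sinh_eq, Real.cosh_eq, Real.cosh_eq,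
    neg_add, neg_sub', sub_neg_eq_add, Real.exp_add, Real.exp_add, Real.exp_neg, Real.exp_neg]
  have := Real.exp_pos t
  have := Real.exp_pos u
  field_simp
  ring

lemma sigmoid_cpow_sub_mul_cpow_add (a b : ℂ) (t : ℝ) :
    (Real.sigmoid t : ℂ) ^ (a - b) * (1 - Real.sigmoid t : ℂ) ^ (a + b)
      = Complex.exp (-(t * b)) * (Real.sigmoid t * (1 - Real.sigmoid t) : ℂ) ^ a := by
  have hσ := Real.sigmoid_pos t
  have hσ' := Real.sigmoid_pos (-t)
  have hσ_ne : (Real.sigmoid t : ℂ) ≠ 0 := Complex.ofReal_ne_zero.2 hσ.ne'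
  have hσ_ne' : (Real.sigmoid (-t) : ℂ) ≠ 0 := Complex.ofReal_ne_zero.2 hσ'.ne'
  have one_sub_cpow : (Real.sigmoid (-t) : ℂ) ^ b
      = (Real.sigmoid t : ℂ) ^ b * Complex.exp (-(t * b)) := by
    rw [← Real.sigmoid_mul_rexp_neg, Complex.ofReal_mul,
      Complex.mul_cpow_ofReal_nonneg hσ.le (Real.exp_pos _).le,
      Complex.cpow_def_of_ne_zero (Complex.ofReal_ne_zero.2 (Real.exp_ne_zero (-t))),
      ← Complex.ofReal_log (Real.exp_pos _).le, Real.log_exp, Complex.ofReal_neg, neg_mul]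
  have hneg : (1 - Real.sigmoid t : ℂ) = Real.sigmoid (-t) := by
    rw [Real.sigmoid_neg]; push_cast; rfl
  rw [hneg, Complex.mul_cpow_ofReal_nonneg hσ.le hσ'.le, Complex.cpow_sub _ _ hσ_ne,
    Complex.cpow_add _ _ hσ_ne', one_sub_cpow]
  have cpow_ne : (Real.sigmoid t : ℂ) ^ b ≠ 0 := by simp [Complex.cpow_eq_zero_iff, hσ.ne']
  field_simp

lemma integral_sigmoid_cpow_mul_cpow (a b : ℂ) :
    ∫ t : ℝ, (Real.sigmoid t : ℂ) ^ a * (1 - Real.sigmoid t : ℂ) ^ b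
      = Complex.betaIntegral a b := by
  have jacobian_smul (t : ℝ) : |Real.sigmoid t * (1 - Real.sigmoid t)| •
      ((Real.sigmoid t : ℂ) ^ (a - 1) * (1 - Real.sigmoid t : ℂ) ^ (b - 1))
      = (Real.sigmoid t : ℂ) ^ a * (1 - Real.sigmoid t : ℂ) ^ b := by
    have hσ := Real.sigmoid_pos t
    have hσ' : 0 < 1 - Real.sigmoid t := sub_pos.2 (Real.sigmoid_lt_one t)
    have hσ_ne : (Real.sigmoid t : ℂ) ≠ 0 := mod_cast hσ.ne'
    have hσ_ne' : (1 - Real.sigmoid t : ℂ) ≠ 0 := mod_cast hσ'.ne'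
    rw [abs_of_pos (mul_pos hσ hσ'), Complex.real_smul, Complex.cpow_sub _ _ hσ_ne,
      Complex.cpow_sub _ _ hσ_ne', Complex.cpow_one, Complex.cpow_one]
    push_cast
    field_simp
  rw [Complex.betaIntegral, intervalIntegral.integral_of_le zero_le_one,
    integral_Ioc_eq_integral_Ioo, ← Real.range_sigmoid, ← Set.image_univ,
    integral_image_eq_integral_abs_deriv_smul MeasurableSet.univ
      (fun t _ ↦ (Real.hasDerivAt_sigmoid t).hasDerivWithinAt) Real.sigmoid_injective.injOn,
    Measure.restrict_univ]
  simp only [jacobian_smul]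

lemma fourier_sigmoid_mul_one_sub_sigmoid_cpow (c : ℂ) (ξ : ℝ) :
    𝓕 (fun t : ℝ ↦ (Real.sigmoid t * (1 - Real.sigmoid t) : ℂ) ^ c) ξ
      = Complex.betaIntegral (c - 2 * Real.pi * ξ * Complex.I)
          (c + 2 * Real.pi * ξ * Complex.I) := by
  rw [← integral_sigmoid_cpow_mul_cpow, Real.fourier_real_eq_integral_exp_smul]
  congr! 2 with t
  rw [sigmoid_cpow_sub_mul_cpow_add, smul_eq_mul]
  push_cast
  ring_nf

end Sigmoid

section BetaIntegral

lemma betaIntegral_half_sub_half_add {z : ℂ} (hz : |z.re| < 1 / 2) :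
    Complex.betaIntegral (1 / 2 - z) (1 / 2 + z) = Real.pi / Complex.cos (Real.pi * z) := by
  obtain ⟨hz_lower, hz_upper⟩ := abs_lt.1 hz
  rw [Complex.betaIntegral_eq_Gamma_mul_div _ _ (by simp; linarith) (by simp; linarith),
    show 1 / 2 + z = 1 - (1 / 2 - z) by ring, Complex.Gamma_mul_Gamma_one_sub, add_sub_cancel,
    Complex.Gamma_one, div_one, ← Complex.sin_pi_div_two_sub]
  ring_nf

lemma betaIntegral_one_sub_one_add {z : ℂ} (hz₀ : z ≠ 0) (hz : |z.re| < 1) :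
    Complex.betaIntegral (1 - z) (1 + z) = Real.pi * z / Complex.sin (Real.pi * z) := by
  obtain ⟨hz_lower, hz_upper⟩ := abs_lt.1 hz
  have Gamma_two : Complex.Gamma (1 - z + (1 + z)) = 1 := by
    rw [show 1 - z + (1 + z) = 1 + 1 by ring, Complex.Gamma_add_one _ one_ne_zero,
      Complex.Gamma_one, one_mul]
  rw [Complex.betaIntegral_eq_Gamma_mul_div _ _ (by simp; linarith) (by simp; linarith),
    Gamma_two, add_comm 1 z, Complex.Gamma_add_one z hz₀, mul_left_comm, mul_comm (Complex.Gamma _),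
    Complex.Gamma_mul_Gamma_one_sub]
  ring

end BetaIntegral

section FourierHyperbolic

lemma integrable_inv_cosh : Integrable fun t : ℝ ↦ (Real.cosh t)⁻¹ := by
  have one_add_sq_le (t : ℝ) : (1 + t ^ 2) / 4 ≤ Real.cosh t := by
    have := Real.quadratic_le_exp_of_nonneg (abs_nonneg t)
    rw [sq_abs] at this
    linarith [Real.exp_abs_le t, Real.cosh_eq t, abs_nonneg t]
  refine (integrable_inv_one_add_sq.const_mul 4).mono'
    (by fun_prop) (Eventually.of_forall fun t ↦ ?_)
  rw [Real.norm_of_nonneg (by positivity), ← inv_inv (4 : ℝ), ← mul_inv, inv_mul_eq_div]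
  exact inv_anti₀ (by positivity) (one_add_sq_le t)

lemma integrable_inv_cosh_add {a : ℝ} (ha : 0 ≤ a) :
    Integrable fun t : ℝ ↦ (Real.cosh t + a)⁻¹ := by
  refine integrable_inv_cosh.mono' (by fun_prop) (Eventually.of_forall fun t ↦ ?_)
  have := Real.cosh_pos t
  rw [Real.norm_of_nonneg (by positivity)]
  exact inv_anti₀ this (le_add_of_nonneg_right ha)

lemma fourier_inv_cosh (ξ : ℝ) :
    𝓕 (fun t : ℝ ↦ (((Real.cosh t)⁻¹ : ℝ) : ℂ)) ξ
      = ((Real.pi / Real.cosh (Real.pi ^ 2 * ξ) : ℝ) : ℂ) := by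
  have inv_cosh_eq (t : ℝ) : (((Real.cosh t)⁻¹ : ℝ) : ℂ)
      = (2 : ℂ) • (Real.sigmoid (2 * t) * (1 - Real.sigmoid (2 * t)) : ℂ) ^ (1 / 2 : ℂ) := by
    rw [sigmoid_mul_one_sub_sigmoid_cpow_half, mul_div_cancel_left₀ _ two_ne_zero, smul_eq_mul]
    push_cast
    rw [mul_inv, mul_inv_cancel_left₀ two_ne_zero]
  simp only [inv_cosh_eq]
  rw [fourier_const_smul, fourier_comp_mul_left
      (fun t ↦ (Real.sigmoid t * (1 - Real.sigmoid t) : ℂ) ^ (1 / 2 : ℂ)) two_ne_zero,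
    fourier_sigmoid_mul_one_sub_sigmoid_cpow, betaIntegral_half_sub_half_add (by simp)]
  have arg_eq : (Real.pi : ℂ) * (2 * Real.pi * (ξ / 2 : ℝ) * Complex.I)
      = ((Real.pi ^ 2 * ξ : ℝ) : ℂ) * Complex.I := by
    push_cast; ring
  rw [arg_eq, Complex.cos_mul_I, abs_of_pos (by positivity), Complex.real_smul, smul_eq_mul]
  push_cast
  rw [mul_inv_cancel_left₀ two_ne_zero]

lemma fourier_sigmoid_mul_one_sub_sigmoid {ξ : ℝ} (hξ : ξ ≠ 0) :
    𝓕 (fun t : ℝ ↦ (Real.sigmoid t * (1 - Real.sigmoid t) : ℂ)) ξ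
      = ((2 * Real.pi ^ 2 * ξ / Real.sinh (2 * Real.pi ^ 2 * ξ) : ℝ) : ℂ) := by
  have h := fourier_sigmoid_mul_one_sub_sigmoid_cpow 1 ξ
  rw [betaIntegral_one_sub_one_add (by simp [hξ, Real.pi_ne_zero]) (by simp)] at h
  simp only [Complex.cpow_one] at h
  have arg_eq : (Real.pi : ℂ) * (2 * Real.pi * ξ * Complex.I)
      = ((2 * Real.pi ^ 2 * ξ : ℝ) : ℂ) * Complex.I := by
    push_cast; ring
  rw [h, arg_eq, Complex.sin_mul_I, mul_div_mul_right _ _ Complex.I_ne_zero]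
  push_cast
  rfl

lemma integrable_sigmoid_mul_one_sub_sigmoid :
    Integrable fun t : ℝ ↦ (Real.sigmoid t * (1 - Real.sigmoid t) : ℂ) := by
  have h := ((integrable_inv_cosh_add zero_le_one).const_mul 2⁻¹).ofReal (𝕜 := ℂ)
  simpa [← sigmoid_mul_one_sub_sigmoid_eq_inv_cosh_add_one] using h

lemma fourier_inv_cosh_add_cosh {u ξ : ℝ} (hu : u ≠ 0) (hξ : ξ ≠ 0) :
    𝓕 (fun t : ℝ ↦ (((Real.cosh t + Real.cosh u)⁻¹ : ℝ) : ℂ)) ξ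
      = ((2 * Real.pi * Real.sin (2 * Real.pi * ξ * u)
          / (Real.sinh (2 * Real.pi ^ 2 * ξ) * Real.sinh u) : ℝ) : ℂ) := by
  have hasDerivAt_sigmoid (t : ℝ) : HasDerivAt (fun t : ℝ ↦ (Real.sigmoid t : ℂ))
      (Real.sigmoid t * (1 - Real.sigmoid t) : ℂ) t := by
    simpa using (Real.hasDerivAt_sigmoid t).ofReal_comp
  have sigmoid_diff (t : ℝ) : (Real.sigmoid (t + u) - Real.sigmoid (t - u) : ℂ)
      = (Real.sinh u : ℂ) • (((Real.cosh t + Real.cosh u)⁻¹ : ℝ) : ℂ) := by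
    rw [smul_eq_mul]
    exact_mod_cast sigmoid_add_sub_sigmoid_sub t u
  have integrable_inv : Integrable fun t : ℝ ↦ (((Real.cosh t + Real.cosh u)⁻¹ : ℝ) : ℂ) :=
    (integrable_inv_cosh_add (Real.cosh_pos u).le).ofReal
  have integrable_diff : Integrable fun t : ℝ ↦
      (Real.sigmoid (t + u) - Real.sigmoid (t - u) : ℂ) := by
    simpa only [sigmoid_diff, smul_eq_mul] using integrable_inv.const_mul (Real.sinh u : ℂ)
  have h := fourier_add_sub_sub_of_hasDerivAt hasDerivAt_sigmoid
    integrable_sigmoid_mul_one_sub_sigmoid integrable_diff ξ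
  simp only [sigmoid_diff] at h
  rw [fourier_const_smul, fourier_sigmoid_mul_one_sub_sigmoid hξ] at h
  have hsinh_u : (Real.sinh u : ℂ) ≠ 0 := mod_cast Real.sinh_ne_zero.2 hu
  have hπξ : ((Real.pi * ξ : ℝ) : ℂ) ≠ 0 := mod_cast mul_ne_zero Real.pi_ne_zero hξ
  rw [Complex.real_smul, Complex.real_smul, smul_eq_mul] at h
  apply mul_left_cancel₀ (mul_ne_zero hπξ hsinh_u)
  rw [mul_assoc, h]
  norm_cast
  field_simp

end FourierHyperbolic

section CosineTransform

lemma integral_Ioi_inv_cosh_mul_cos (w : ℝ) :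
    ∫ t in Set.Ioi (0 : ℝ), (Real.cosh t)⁻¹ * Real.cos (w * t)
      = Real.pi / (2 * Real.cosh (Real.pi * w / 2)) := by
  rw [integral_Ioi_mul_cos_eq_re_fourier (by simp [Function.Even]) integrable_inv_cosh,
    fourier_inv_cosh, Complex.ofReal_re]
  field_simp

lemma integral_Ioi_inv_cosh_add_cosh_mul_cos {u w : ℝ} (hu : u ≠ 0) (hw : w ≠ 0) :
    ∫ t in Set.Ioi (0 : ℝ), (Real.cosh t + Real.cosh u)⁻¹ * Real.cos (w * t)
      = Real.pi * Real.sin (w * u) / (Real.sinh (Real.pi * w) * Real.sinh u) := by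
  rw [integral_Ioi_mul_cos_eq_re_fourier (by simp [Function.Even])
      (integrable_inv_cosh_add (Real.cosh_pos u).le),
    fourier_inv_cosh_add_cosh hu (by positivity), Complex.ofReal_re]
  field_simp

lemma integrable_mul_cos {f : ℝ → ℝ} (hf : Integrable f) (w : ℝ) :
    Integrable fun t ↦ f t * Real.cos (w * t) :=
  hf.mul_bdd (c := 1) (by fun_prop) (Eventually.of_forall fun t ↦ Real.abs_cos_le_one _)

end CosineTransform

theorem statement19_general {u w : ℝ} (hu : u ≠ 0) (hw : w ≠ 0) :
    ∫ t in Set.Ioi (0 : ℝ), Real.cos (w * t) / (Real.cosh t * (Real.cosh t + Real.cosh u))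
      = Real.pi / (2 * Real.cosh (Real.pi * w / 2) * Real.cosh u) -
        2 * Real.pi * Real.sin (w * u) / (Real.sinh (Real.pi * w) * Real.sinh (2 * u)) := by
  have partial_fractions (t : ℝ) :
      Real.cos (w * t) / (Real.cosh t * (Real.cosh t + Real.cosh u))
        = (Real.cosh u)⁻¹ * ((Real.cosh t)⁻¹ * Real.cos (w * t)
            - (Real.cosh t + Real.cosh u)⁻¹ * Real.cos (w * t)) := by
    have := Real.cosh_pos t
    have := Real.cosh_pos u
    field_simp
    ring
  have integrable_left := integrable_mul_cos integrable_inv_cosh w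
  have integrable_right :=
    integrable_mul_cos (integrable_inv_cosh_add (Real.cosh_pos u).le) w
  simp only [partial_fractions]
  rw [integral_const_mul, integral_sub integrable_left.integrableOn integrable_right.integrableOn,
    integral_Ioi_inv_cosh_mul_cos, integral_Ioi_inv_cosh_add_cosh_mul_cos hu hw, Real.sinh_two_mul]
  field_simp

theorem statement19 (u : ℝ) (hu : u ∈ Set.Icc (-Real.pi) Real.pi) (hu0 : u ≠ 0)
    (n : ℕ) (hn : 1 ≤ n) :
    ∫ t in Set.Ioi (0 : ℝ), Real.cos (n * t) / (Real.cosh t * (Real.cosh t + Real.cosh u))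
      = Real.pi / (2 * Real.cosh (Real.pi * n / 2) * Real.cosh u) -
        2 * Real.pi * Real.sin (n * u) / (Real.sinh (Real.pi * n) * Real.sinh (2 * u)) := by
  exact statement19_general hu0 (Nat.cast_ne_zero.2 (Nat.one_le_iff_ne_zero.1 hn))
end
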